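/- Let d ≥ 4 be even and let P ⊆ ℝ^d be a d-dimensional simplicial reflexive polytope with exactly 3d−1 vertices. Then P splits into (d−2)/2 copies of V2 and one copy of one of the three pentagons Ṽ2, E1, E2. -/

import Mathlib

noncomputable section

/-- The standard inner product on `ℝ^d`. -/
def dotp {d : ℕ} (x y : Fin d → ℝ) : ℝ := ∑ i, x i * y i

/-- `x` is a point of the lattice `ℤ^d`. -/
def IsLP {d : ℕ} (x : Fin d → ℝ) : Prop := ∀ i, ∃ n : ℤ, x i = (n : ℝ)

/-- A lattice polytope: convex hull of finitely many lattice points. -/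
def IsLatticePolytope {d : ℕ} (P : Set (Fin d → ℝ)) : Prop :=
  ∃ V : Finset (Fin d → ℝ), (∀ v ∈ V, IsLP v) ∧ P = convexHull ℝ (V : Set (Fin d → ℝ))

/-- The dual polytope `P* = {x | ⟨x,y⟩ ≤ 1 ∀ y ∈ P}`. -/
def dualPolytope {d : ℕ} (P : Set (Fin d → ℝ)) : Set (Fin d → ℝ) :=
  {x | ∀ y ∈ P, dotp x y ≤ 1}

/-- `P` is a reflexive polytope: a (`d`-dimensional) lattice polytope with `0` in its
interior whose dual is again a lattice polytope. -/
def IsReflexive {d : ℕ} (P : Set (Fin d → ℝ)) : Prop :=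
  IsLatticePolytope P ∧ (0 : Fin d → ℝ) ∈ interior P ∧ IsLatticePolytope (dualPolytope P)

/-- `F` is a facet of `P` with (uniquely determined) outer normal `u`, normalized by
`⟨u, F⟩ = 1` (possible since `0` is in the interior of `P`). -/
def IsFacetNormal {d : ℕ} (P F : Set (Fin d → ℝ)) (u : Fin d → ℝ) : Prop :=
  F.Nonempty ∧ (∀ y ∈ P, dotp u y ≤ 1) ∧ F = {y ∈ P | dotp u y = 1} ∧
    Module.finrank ℝ (vectorSpan ℝ F) = d - 1

/-- `F` is a facet of `P`. -/
def IsFacet {d : ℕ} (P F : Set (Fin d → ℝ)) : Prop := ∃ u, IsFacetNormal P F u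

/-- `P` is simplicial: every facet has exactly `d` vertices. -/
def IsSimplicial {d : ℕ} (P : Set (Fin d → ℝ)) : Prop :=
  ∀ F, IsFacet P F → (Set.extremePoints ℝ F).ncard = d

/-- Vertices of the hexagon `V₂`. -/
def V2v : Set (Fin 2 → ℤ) := {![1,0], ![0,1], ![1,1], ![-1,0], ![0,-1], ![-1,-1]}

/-- Vertices of the pentagon `Ṽ₂`. -/
def tV2v : Set (Fin 2 → ℤ) := {![1,0], ![0,1], ![1,1], ![-1,0], ![0,-1]}

/-- Vertices of the pentagon `E₁`. -/
def E1v : Set (Fin 2 → ℤ) := {![1,0], ![-1,2], ![-1,1], ![0,-1], ![1,-1]}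

/-- Vertices of the pentagon `E₂`. -/
def E2v : Set (Fin 2 → ℤ) := {![1,0], ![0,1], ![-1,1], ![-1,-1], ![1,-1]}

/-- Vertices of the 3-polytope `Q₃`. -/
def Q3v : Set (Fin 3 → ℤ) :=
  {![1,0,0], ![-1,0,0], ![0,1,0], ![0,-1,0], ![1,1,0], ![-1,-1,0], ![0,0,1], ![0,0,-1]}

/-- Vertices of the 3-polytope `Q₃'`. -/
def Q3'v : Set (Fin 3 → ℤ) :=
  {![1,0,0], ![-1,0,0], ![0,1,0], ![0,-1,0], ![1,1,0], ![-1,-1,0], ![0,0,1], ![1,0,-1]}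

/-- Embed `ℤ²` into coordinates `o, o+1` of `ℝ^d`. -/
def embed2 (d o : ℕ) (v : Fin 2 → ℤ) : Fin d → ℝ :=
  fun i => if (i : ℕ) = o then (v 0 : ℝ) else if (i : ℕ) = o + 1 then (v 1 : ℝ) else 0

/-- Embed `ℤ³` into coordinates `0, 1, 2` of `ℝ^d`. -/
def embed3 (d : ℕ) (v : Fin 3 → ℤ) : Fin d → ℝ :=
  fun i => if (i : ℕ) = 0 then (v 0 : ℝ) else if (i : ℕ) = 1 then (v 1 : ℝ)
    else if (i : ℕ) = 2 then (v 2 : ℝ) else 0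

/-- Standard model of a polytope in `ℝ^d` that splits into a polygon with vertex set `Q`
(in coordinates `0,1`) and `(d-2)/2` copies of `V₂` (in the remaining coordinate pairs). -/
def splitModel2 (d : ℕ) (Q : Set (Fin 2 → ℤ)) : Set (Fin d → ℝ) :=
  convexHull ℝ (embed2 d 0 '' Q ∪ ⋃ j ∈ Finset.range ((d - 2) / 2), embed2 d (2 * j + 2) '' V2v)

/-- Standard model of a polytope in `ℝ^d` that splits into a 3-polytope with vertex set `Q`
(in coordinates `0,1,2`) and `(d-3)/2` copies of `V₂` (in the remaining coordinate pairs). -/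
def splitModel3 (d : ℕ) (Q : Set (Fin 3 → ℤ)) : Set (Fin d → ℝ) :=
  convexHull ℝ (embed3 d '' Q ∪ ⋃ j ∈ Finset.range ((d - 3) / 2), embed2 d (2 * j + 3) '' V2v)

/-- Standard model of a polytope in `ℝ^d` that splits into `d/2` copies of `V₂`. -/
def splitModelV2 (d : ℕ) : Set (Fin d → ℝ) :=
  convexHull ℝ (⋃ j ∈ Finset.range (d / 2), embed2 d (2 * j) '' V2v)

/-- `φ` is a unimodular transformation: a linear automorphism of `ℝ^d` mapping the lattice
`ℤ^d` onto itself. `P` splits into given polytopes iff some unimodular transformation maps `P`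
onto the corresponding standard model. -/
def Unimodular {d : ℕ} (φ : (Fin d → ℝ) ≃ₗ[ℝ] (Fin d → ℝ)) : Prop :=
  ∀ x, IsLP x ↔ IsLP (φ x)

/-!
The vertices of a simplicial reflexive polytope `P` lie on integral levels `1, 0, -1, …` with
respect to every facet `F`: exactly `d` vertices have level `1`, and at most `d` have level `0`,
since each of these is the new vertex of one of the `d` neighbouring facets. Summing the levels of
all `3d - 1` vertices, with sum `s`, shows that the total amount by which vertices of `P` lie below
level `-1` is `#{vertices of level 0} + 1 - d - ⟨u_F, s⟩`. Hence `⟨u_F, s⟩ ≤ 1`. If equality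
holds, or if `s = 0` and some vertex lies below level `-1`, then `F` has `d` vertices of level `0`;
there is no vertex below level `-1` in the first case, and just one, at level `-2`, in the second.

If `s ≠ 0`, choose `F` such that `s` lies in the cone over `F`; then `⟨u_F, s⟩ = 1`. If `s = 0`,
parity gives a vertex `z` with `-z` not a vertex, hence a facet `F` on which `z` has level `-2`, and
`-z` lies in the cone over `F`. In both cases the facets obtained from `F` by exchanging a vertex
along which the distinguished direction `s` or `-z` has coordinate `0` have the same properties.
Comparing them, these coordinate directions pair up into hexagons `V₂`; as `d` is even, exactly two
directions `p`, `q` remain, and they carry a pentagon: `Ṽ₂` if `s` is a vertex, `E₁` if `s` is the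
midpoint of two vertices, and `E₂` if `s = 0`.
-/

lemma exists_basis_exchange {ι E : Type*} [Finite ι] [AddCommGroup E] [Module ℝ E]
    (b : Module.Basis ι ℝ E) {i : ι} {x : E} (hx : b.coord i x ≠ 0) :
    ∃ b' : Module.Basis ι ℝ E, b' i = x ∧ ∀ j ≠ i, b' j = b j := by
  classical
  have := Fintype.ofFinite ι
  have hli : LinearIndependent ℝ (Function.update b i x) :=
    b.linearIndependent.update i x ⟨1, one_mem _, b.repr x,
      mem_nonZeroDivisors_of_ne_zero hx, by rw [one_smul, b.linearCombination_repr]⟩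
  have : Nonempty ι := ⟨i⟩
  refine ⟨basisOfLinearIndependentOfCardEqFinrank hli (Module.finrank_eq_card_basis b).symm,
    by simp, fun j hj => by simp [hj]⟩

lemma even_card_of_involution {α : Type*} {s : Finset α} {f : α → α} (hmem : ∀ a ∈ s, f a ∈ s)
    (hne : ∀ a ∈ s, f a ≠ a) (hinv : ∀ a ∈ s, f (f a) = a) : Even s.card := by
  have hsum : ∑ _ ∈ s, (1 : ZMod 2) = 0 :=
    Finset.sum_involution (fun a _ => f a) (fun _ _ => by decide) (fun a ha _ => hne a ha)
      hmem hinv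
  rw [Finset.sum_const, nsmul_eq_mul, mul_one] at hsum
  exact ZMod.natCast_eq_zero_iff_even.1 hsum

lemma exists_half_of_involution {α : Type*} [LinearOrder α] {s : Finset α} {σ : α → α}
    (hmem : ∀ i ∈ s, σ i ∈ s) (hne : ∀ i ∈ s, σ i ≠ i) (hinv : ∀ i ∈ s, σ (σ i) = i) :
    ∃ T ⊆ s, Set.InjOn σ T ∧ Disjoint T (T.image σ) ∧ T ∪ T.image σ = s := by
  refine ⟨s.filter fun i => i < σ i, Finset.filter_subset _ _, fun i hi j hj h => ?_, ?_, ?_⟩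
  · simp only [Finset.coe_filter, Set.mem_ofPred_eq] at hi hj
    rw [← hinv i hi.1, h, hinv j hj.1]
  · refine Finset.disjoint_left.2 fun i hi hi' => ?_
    obtain ⟨j, hj, rfl⟩ := Finset.mem_image.1 hi'
    simp only [Finset.mem_filter] at hi hj
    exact lt_asymm hj.2 (by simpa only [hinv j hj.1] using hi.2)
  · ext i
    simp only [Finset.mem_union, Finset.mem_filter, Finset.mem_image]
    constructor
    · rintro (⟨hi, -⟩ | ⟨j, ⟨hj, -⟩, rfl⟩)
      exacts [hi, hmem j hj]
    · intro hi
      rcases (hne i hi).lt_or_gt with h | h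
      · exact .inr ⟨σ i, ⟨hmem i hi, by rwa [hinv i hi]⟩, hinv i hi⟩
      · exact .inl ⟨hi, h⟩

section Convex

variable {V : Type*} [NormedAddCommGroup V] [NormedSpace ℝ V]

lemma convexHull_extremePoints_convexHull {s : Set V} (hs : s.Finite) :
    convexHull ℝ (Set.extremePoints ℝ (convexHull ℝ s)) = convexHull ℝ s := by
  have hfin := hs.subset (extremePoints_convexHull_subset (𝕜 := ℝ))
  rw [← (hfin.isClosed_convexHull ℝ).closure_eq]
  exact closure_convexHull_extremePoints (hs.isCompact_convexHull ℝ) (convex_convexHull ℝ s)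

lemma forall_convexHull_le {s : Set V} {l : V →ₗ[ℝ] ℝ} {c : ℝ} (h : ∀ w ∈ s, l w ≤ c) :
    ∀ y ∈ convexHull ℝ s, l y ≤ c :=
  convexHull_min (t := {y | l y ≤ c}) h (convex_halfSpace_le l.isLinear c)

variable [FiniteDimensional ℝ V]

lemma exists_neg_of_zero_mem_interior {s : Set V} (h0 : 0 ∈ interior s) {l : V →ₗ[ℝ] ℝ}
    (hl : l ≠ 0) : ∃ w ∈ s, l w < 0 := by
  by_contra! hge
  have hmin : IsLocalMin l.toContinuousLinearMap 0 := by
    filter_upwards [mem_interior_iff_mem_nhds.1 h0] with y hy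
    simpa using hge y hy
  exact hl (by simpa using hmin.hasFDerivAt_eq_zero l.toContinuousLinearMap.hasFDerivAt)

lemma isExtreme_of_forall_le {P : Set V} {l : V →ₗ[ℝ] ℝ} {c : ℝ} (h : ∀ y ∈ P, l y ≤ c) :
    IsExtreme ℝ P {y ∈ P | l y = c} := by
  refine IsExposed.isExtreme (𝕜 := ℝ) fun ⟨t, ht, hlt⟩ => ⟨l.toContinuousLinearMap, ?_⟩
  ext y
  refine and_congr_right fun hy => ⟨fun hly z hz => ?_, fun hle => (h y hy).antisymm ?_⟩
  · exact (h z hz).trans hly.ge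
  · exact hlt.ge.trans (hle t ht)

end Convex

section Span

variable {E : Type*} [AddCommGroup E] [Module ℝ E]

lemma vectorSpan_eq_ker_of_span_eq_top {F : Set E} {u : E →ₗ[ℝ] ℝ} (hu : ∀ y ∈ F, u y = 1)
    (hspan : Submodule.span ℝ F = ⊤) (hF : F.Nonempty) : vectorSpan ℝ F = LinearMap.ker u := by
  obtain ⟨t, ht⟩ := hF
  have hle : vectorSpan ℝ F ≤ LinearMap.ker u := by
    rw [vectorSpan_def, Submodule.span_le]
    rintro _ ⟨x, hx, y, hy, rfl⟩
    simp [hu x hx, hu y hy]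
  have hsup : vectorSpan ℝ F ⊔ Submodule.span ℝ {t} = ⊤ := by
    rw [eq_top_iff, ← hspan, Submodule.span_le]
    intro w hw
    rw [← sub_add_cancel w t]
    exact Submodule.add_mem_sup (vsub_mem_vectorSpan ℝ hw ht) (Submodule.mem_span_singleton_self t)
  refine le_antisymm hle fun x hx => ?_
  obtain ⟨v, hv, _, hy, rfl⟩ := Submodule.mem_sup.1 (hsup ▸ Submodule.mem_top : x ∈ _)
  obtain ⟨c, rfl⟩ := Submodule.mem_span_singleton.1 hy
  have hc : c = 0 := by
    have hv0 : u v = 0 := hle hv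
    simpa [hv0, hu t ht] using hx
  simpa [hc] using hv

lemma finrank_vectorSpan_of_span_eq_top [FiniteDimensional ℝ E] {F : Set E} {u : E →ₗ[ℝ] ℝ}
    (hu : ∀ y ∈ F, u y = 1) (hspan : Submodule.span ℝ F = ⊤) (hF : F.Nonempty) :
    Module.finrank ℝ (vectorSpan ℝ F) = Module.finrank ℝ E - 1 := by
  have hne : u ≠ 0 := by
    obtain ⟨t, ht⟩ := hF
    rintro rfl
    simpa using hu t ht
  rw [vectorSpan_eq_ker_of_span_eq_top hu hspan hF,
    ← Module.Dual.finrank_ker_add_one_of_ne_zero hne, Nat.add_sub_cancel]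

end Span

section PlanePoint

variable {E : Type*} [AddCommGroup E] [Module ℝ E]

/-- The point of the plane spanned by `x` and `y` with the given integral coordinates. -/
def planePoint (x y : E) (t : Fin 2 → ℤ) : E := (t 0 : ℝ) • x + (t 1 : ℝ) • y

lemma mem_image_planePoint_V2v {x y w : E} : w ∈ planePoint x (y - x) '' V2v ↔
    w = x ∨ w = -x ∨ w = y ∨ w = -y ∨ w = y - x ∨ w = x - y := by
  have h : -x + (x - y) = -y := by abel
  simp only [V2v, planePoint, Set.image_insert_eq, Set.image_singleton, Set.mem_insert_iff,
    Set.mem_singleton_iff, Matrix.cons_val_zero, Matrix.cons_val_one, Int.cast_one, Int.cast_zero,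
    Int.cast_neg, one_smul, zero_smul, neg_smul, add_zero, zero_add, add_sub_cancel, neg_sub, h]
  tauto

end PlanePoint

section IntLattice

/-- The lattice `ℤ^d`. -/
def intLattice (d : ℕ) : AddSubgroup (Fin d → ℝ) where
  carrier := {x | IsLP x}
  zero_mem' := fun _ => ⟨0, by simp⟩
  add_mem' := fun hx hy i => by
    obtain ⟨⟨m, hm⟩, n, hn⟩ := And.intro (hx i) (hy i)
    exact ⟨m + n, by simp [hm, hn]⟩
  neg_mem' := fun hx i => by
    obtain ⟨m, hm⟩ := hx i
    exact ⟨-m, by simp [hm]⟩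

@[simp] lemma mem_intLattice {d : ℕ} {x : Fin d → ℝ} : x ∈ intLattice d ↔ IsLP x := Iff.rfl

lemma isLP_embed2 (d o : ℕ) (t : Fin 2 → ℤ) : IsLP (embed2 d o t) := fun i => by
  unfold embed2
  split_ifs
  exacts [⟨t 0, rfl⟩, ⟨t 1, rfl⟩, ⟨0, by simp⟩]

lemma exists_linearMap_embed2 {d n : ℕ} (hd : d = 2 * n) {x y : Fin n → Fin d → ℝ}
    (hx : ∀ k, IsLP (x k)) (hy : ∀ k, IsLP (y k)) :
    ∃ ψ : (Fin d → ℝ) →ₗ[ℝ] (Fin d → ℝ), (∀ z, IsLP z → IsLP (ψ z)) ∧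
      ∀ (k : Fin n) t, ψ (embed2 d (2 * k) t) = planePoint (x k) (y k) t := by
  let a : Fin n → Fin d := fun k => ⟨2 * k, by omega⟩
  let b : Fin n → Fin d := fun k => ⟨2 * k + 1, by omega⟩
  let ψ : (Fin d → ℝ) →ₗ[ℝ] (Fin d → ℝ) :=
    ∑ k, ((LinearMap.proj (a k)).smulRight (x k) + (LinearMap.proj (b k)).smulRight (y k))
  have hψ : ∀ z, ψ z = ∑ k, (z (a k) • x k + z (b k) • y k) := fun z => by
    simp [ψ, LinearMap.sum_apply]
  refine ⟨ψ, fun z hz => ?_, fun k t => ?_⟩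
  · have hsmul : ∀ i {v : Fin d → ℝ}, IsLP v → z i • v ∈ intLattice d := fun i v hv => by
      obtain ⟨m, hm⟩ := hz i
      rw [hm, Int.cast_smul_eq_zsmul]
      exact zsmul_mem hv m
    rw [hψ, ← mem_intLattice]
    exact sum_mem fun k _ => add_mem (hsmul _ (hx k)) (hsmul _ (hy k))
  · rw [hψ, Finset.sum_eq_single k (fun l _ hl => ?_) (by simp)]
    · simp [embed2, a, b, planePoint]
    · have hne : (l : ℕ) ≠ k := Fin.val_ne_of_ne hl
      have h₁ : (2 * l + 1 : ℕ) ≠ 2 * k := by omega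
      have h₂ : (2 * l : ℕ) ≠ 2 * k + 1 := by omega
      simp [embed2, a, b, hne, h₁, h₂]

lemma exists_unimodular_embed2 {d n : ℕ} (hd : d = 2 * n) {x y : Fin n → Fin d → ℝ}
    (hx : ∀ k, IsLP (x k)) (hy : ∀ k, IsLP (y k))
    (hspan : ∀ w, IsLP w → ∃ t : Fin n → Fin 2 → ℤ, w = ∑ k, planePoint (x k) (y k) (t k)) :
    ∃ φ : (Fin d → ℝ) ≃ₗ[ℝ] (Fin d → ℝ), Unimodular φ ∧
      ∀ (k : Fin n) t, φ (planePoint (x k) (y k) t) = embed2 d (2 * k) t := by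
  obtain ⟨ψ, hψ, hψe⟩ := exists_linearMap_embed2 hd hx hy
  have hlift : ∀ w, IsLP w → ∃ z, IsLP z ∧ ψ z = w := fun w hw => by
    obtain ⟨t, rfl⟩ := hspan w hw
    refine ⟨∑ k : Fin n, embed2 d (2 * k) (t k), ?_, by simp [hψe]⟩
    rw [← mem_intLattice]
    exact sum_mem fun k _ => isLP_embed2 d (2 * k) (t k)
  have hsurj : Function.Surjective ψ := by
    rw [← LinearMap.range_eq_top, eq_top_iff, ← (Pi.basisFun ℝ (Fin d)).span_eq,
      Submodule.span_le]
    rintro _ ⟨i, rfl⟩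
    obtain ⟨z, -, hz⟩ := hlift (Pi.basisFun ℝ (Fin d) i) fun j =>
      ⟨if j = i then 1 else 0, by simp [Pi.single_apply]⟩
    exact ⟨z, hz⟩
  let e := LinearEquiv.ofBijective ψ ⟨LinearMap.injective_iff_surjective.2 hsurj, hsurj⟩
  have he : ∀ z, e z = ψ z := fun z => rfl
  refine ⟨e.symm, fun w => ⟨fun hw => ?_, fun hw => ?_⟩, fun k t => ?_⟩
  · obtain ⟨z, hz, rfl⟩ := hlift w hw
    rwa [← he, e.symm_apply_apply]
  · simpa only [← he, e.apply_symm_apply] using hψ _ hw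
  · rw [← hψe, ← he, e.symm_apply_apply]

end IntLattice

section DualPolytope

variable {d : ℕ} {P : Set (Fin d → ℝ)}

lemma exists_int_dotp {x y : Fin d → ℝ} (hx : IsLP x) (hy : IsLP y) : ∃ n : ℤ, dotp x y = n := by
  choose m hm using hx
  choose n hn using hy
  exact ⟨∑ i, m i * n i, by simp [dotp, hm, hn]⟩

lemma exists_eq_dotp (u : (Fin d → ℝ) →ₗ[ℝ] ℝ) : ∃ x, ∀ y, u y = dotp x y :=
  ⟨(dotProductEquiv ℝ (Fin d)).symm u, fun y => by
    conv_lhs => rw [← (dotProductEquiv ℝ (Fin d)).apply_symm_apply u]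
    rfl⟩

lemma eq_of_dotp_eq_one {T : Set (Fin d → ℝ)} (hspan : Submodule.span ℝ T = ⊤)
    {x x' : Fin d → ℝ} (hx : ∀ w ∈ T, dotp x w = 1) (hx' : ∀ w ∈ T, dotp x' w = 1) : x = x' :=
  (dotProductEquiv ℝ (Fin d)).injective
    (LinearMap.ext_on hspan fun w hw => (hx w hw).trans (hx' w hw).symm)

lemma mem_extremePoints_dualPolytope {x : Fin d → ℝ} (hx : x ∈ dualPolytope P)
    (hspan : Submodule.span ℝ {y ∈ P | dotp x y = 1} = ⊤) :
    x ∈ Set.extremePoints ℝ (dualPolytope P) := by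
  refine mem_extremePoints_iff_left.2 ⟨hx, ?_⟩
  rintro x₁ h₁ x₂ h₂ ⟨a, c, ha, hc, hac, rfl⟩
  refine eq_of_dotp_eq_one hspan (fun w hw => ?_) fun w hw => hw.2
  have hw₁ := h₁ w hw.1
  have hw₂ := h₂ w hw.1
  have hsum : a * dotp x₁ w + c * dotp x₂ w = 1 := by
    rw [← hw.2]
    exact ((add_dotProduct (a • x₁) (c • x₂) w).trans
      (by rw [smul_dotProduct, smul_dotProduct]; rfl)).symm
  nlinarith

lemma isLP_of_span_eq_top (hP : IsReflexive P) {x : Fin d → ℝ} (hx : x ∈ dualPolytope P)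
    (hspan : Submodule.span ℝ {y ∈ P | dotp x y = 1} = ⊤) : IsLP x := by
  obtain ⟨-, -, D, hD, hPD⟩ := hP
  have hxe := mem_extremePoints_dualPolytope hx hspan
  rw [hPD] at hxe
  exact hD x (extremePoints_convexHull_subset hxe)

lemma ncard_extremePoints_tight (hd : 0 < d) (hs : IsSimplicial P) {x : Fin d → ℝ}
    (hx : x ∈ dualPolytope P) (hspan : Submodule.span ℝ {y ∈ P | dotp x y = 1} = ⊤) :
    {y ∈ Set.extremePoints ℝ P | dotp x y = 1}.ncard = d := by
  have hne : {y ∈ P | dotp x y = 1}.Nonempty := by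
    rw [Set.nonempty_iff_ne_empty]
    intro h
    have : Nontrivial (Fin d → ℝ) := Module.nontrivial_of_finrank_pos (R := ℝ) (by simpa using hd)
    rw [h, Submodule.span_empty] at hspan
    exact bot_ne_top hspan
  let u := dotProductEquiv ℝ (Fin d) x
  have hrank := finrank_vectorSpan_of_span_eq_top (u := u) (fun y hy => hy.2) hspan hne
  rw [Module.finrank_fin_fun] at hrank
  have hcard := hs _ ⟨x, hne, hx, rfl, hrank⟩
  have hext : IsExtreme ℝ P {y ∈ P | dotp x y = 1} := isExtreme_of_forall_le (l := u) hx
  rw [hext.extremePoints_eq] at hcard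
  refine Eq.trans (congrArg _ ?_) hcard
  ext y
  exact ⟨fun h => ⟨⟨h.1.1, h.2⟩, h.1⟩, fun h => ⟨h.2, h.1.2⟩⟩

end DualPolytope

/-- The combinatorial data of the vertex set of a simplicial reflexive polytope of dimension
`card ι` in a real vector space `E`, without reference to the polytope itself: the origin is an
interior point (`exists_neg`), and every facet, given as a supporting functional `u ≤ 1` which is
tight on a spanning set, is integral on the lattice (reflexivity) and has `card ι` vertices
(simpliciality). -/
structure VertexConfig (ι E : Type*) [Fintype ι] [AddCommGroup E] [Module ℝ E] where
  verts : Finset E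
  lattice : AddSubgroup E
  finrank_eq : Module.finrank ℝ E = Fintype.card ι
  verts_subset : (verts : Set E) ⊆ lattice
  zero_notMem : 0 ∉ verts
  exists_neg : ∀ l : E →ₗ[ℝ] ℝ, l ≠ 0 → ∃ w ∈ verts, l w < 0
  supporting : ∀ u : E →ₗ[ℝ] ℝ, (∀ w ∈ verts, u w ≤ 1) →
    Submodule.span ℝ (verts.filter (u · = 1) : Set E) = ⊤ →
    (∀ x ∈ lattice, ∃ n : ℤ, u x = n) ∧ (verts.filter (u · = 1)).card = Fintype.card ι

namespace VertexConfig

variable {ι E : Type*} [Fintype ι] [AddCommGroup E] [Module ℝ E]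

/-- A facet of the configuration, encoded by the basis of `E` formed by its vertices; its
supporting functional is the coordinate sum. -/
structure Facet (C : VertexConfig ι E) where
  basis : Module.Basis ι ℝ E
  basis_mem : ∀ i, basis i ∈ C.verts
  sumCoords_le : ∀ w ∈ C.verts, basis.sumCoords w ≤ 1

variable {C : VertexConfig ι E}

section Existence

lemma exists_tight_of_ne_zero {u l : E →ₗ[ℝ] ℝ} (hu : ∀ w ∈ C.verts, u w ≤ 1) (hl : l ≠ 0) :
    ∃ t : ℝ, 0 ≤ t ∧ (∀ w ∈ C.verts, (u + t • l) w ≤ 1) ∧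
      ∃ w ∈ C.verts, 0 < l w ∧ (u + t • l) w = 1 := by
  obtain ⟨w₀, hw₀, hlw₀⟩ := C.exists_neg (-l) (neg_ne_zero.2 hl)
  have hne : (C.verts.filter (0 < l ·)).Nonempty :=
    ⟨w₀, Finset.mem_filter.2 ⟨hw₀, neg_lt_zero.1 hlw₀⟩⟩
  obtain ⟨x, hx, hmin⟩ := Finset.exists_min_image _ (fun w => (1 - u w) / l w) hne
  simp only [Finset.mem_filter] at hx hmin
  obtain ⟨hxC, hlx⟩ := hx
  have ht : 0 ≤ (1 - u x) / l x := div_nonneg (by linarith [hu x hxC]) hlx.le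
  refine ⟨(1 - u x) / l x, ht, fun w hw => ?_, x, hxC, hlx, ?_⟩
  · simp only [LinearMap.add_apply, LinearMap.smul_apply, smul_eq_mul]
    rcases lt_or_ge 0 (l w) with h | h
    · linarith [(le_div_iff₀ h).1 (hmin w ⟨hw, h⟩)]
    · linarith [mul_nonpos_of_nonneg_of_nonpos ht h, hu w hw]
  · simp only [LinearMap.add_apply, LinearMap.smul_apply, smul_eq_mul]
    field_simp
    ring

variable (C) in
lemma exists_spanning_tight : ∃ u : E →ₗ[ℝ] ℝ, (∀ w ∈ C.verts, u w ≤ 1) ∧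
    Submodule.span ℝ (C.verts.filter (u · = 1) : Set E) = ⊤ := by
  let T : Set (Finset E) :=
    {s | ∃ u : E →ₗ[ℝ] ℝ, (∀ w ∈ C.verts, u w ≤ 1) ∧ C.verts.filter (u · = 1) = s}
  have hT : T.Finite := C.verts.powerset.finite_toSet.subset (by
    rintro _ ⟨u, -, rfl⟩
    exact Finset.mem_powerset.2 (Finset.filter_subset _ _))
  obtain ⟨_, ⟨u, hu, rfl⟩, hmax⟩ := hT.exists_maximal ⟨_, 0, by simp, rfl⟩
  refine ⟨u, hu, not_lt_top_iff.1 fun hlt => ?_⟩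
  obtain ⟨l, hl, hker⟩ := Submodule.exists_le_ker_of_lt_top _ hlt
  obtain ⟨t, -, ht, x, hx, hlx, hux⟩ := exists_tight_of_ne_zero hu hl
  have hlu : ∀ w ∈ C.verts.filter (u · = 1), l w = 0 := fun w hw =>
    hker (Submodule.subset_span hw)
  have hsub : C.verts.filter (u · = 1) ≤ C.verts.filter ((u + t • l) · = 1) := fun w hw => by
    have h := Finset.mem_filter.1 hw
    simp [h.1, h.2, hlu w hw]
  exact hlx.ne' (hlu x (hmax ⟨_, ht, rfl⟩ hsub (Finset.mem_filter.2 ⟨hx, hux⟩)))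

variable (C) in
lemma nonempty_facet : Nonempty C.Facet := by
  obtain ⟨u, hu, hspan⟩ := exists_spanning_tight C
  obtain ⟨-, hcard⟩ := C.supporting u hu hspan
  let e : ι ≃ C.verts.filter (u · = 1) := Fintype.equivOfCardEq (by simpa using hcard.symm)
  have he : ∀ i, (e i : E) ∈ C.verts ∧ u (e i) = 1 := fun i => Finset.mem_filter.1 (e i).2
  have hrange : Set.range (fun i => (e i : E)) = C.verts.filter (u · = 1) := by
    rw [Set.range_comp' Subtype.val, e.range_eq_univ, Set.image_univ]
    exact Subtype.range_coe
  let b := basisOfTopLeSpanOfCardEqFinrank (fun i => (e i : E)) (by rw [hrange, hspan])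
    C.finrank_eq.symm
  have hb : ∀ i, b i = e i := fun i => by simp [b]
  have hsum : b.sumCoords = u := b.ext fun i => by
    rw [b.sumCoords_self_apply, hb, (he i).2]
  exact ⟨⟨b, fun i => hb i ▸ (he i).1, fun w hw => hsum ▸ hu w hw⟩⟩

end Existence

namespace Facet

/-- The supporting functional of a facet, equal to `1` exactly on the facet; the value at a vertex
is its *level*. -/
def level (F : C.Facet) : E →ₗ[ℝ] ℝ := F.basis.sumCoords

/-- The coordinate of a vector along the vertex `F.basis i` of the facet `F`. -/
def coord (F : C.Facet) (i : ι) : E →ₗ[ℝ] ℝ := F.basis.coord i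

lemma level_eq_sum (F : C.Facet) (w : E) : F.level w = ∑ i, F.coord i w := by
  simp [level, coord]

@[simp] lemma level_basis (F : C.Facet) (i : ι) : F.level (F.basis i) = 1 :=
  F.basis.sumCoords_self_apply i

lemma level_le (F : C.Facet) {w : E} (hw : w ∈ C.verts) : F.level w ≤ 1 :=
  F.sumCoords_le w hw

@[simp] lemma coord_self (F : C.Facet) (i : ι) : F.coord i (F.basis i) = 1 := by
  simp [coord]

lemma coord_basis_of_ne (F : C.Facet) {i j : ι} (h : j ≠ i) :
    F.coord i (F.basis j) = 0 := by
  simp [coord, h]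

lemma ext_coord (F : C.Facet) {v w : E} (h : ∀ i, F.coord i v = F.coord i w) : v = w :=
  F.basis.ext_elem h

lemma supporting (F : C.Facet) : (∀ x ∈ C.lattice, ∃ n : ℤ, F.level x = n) ∧
    (C.verts.filter (F.level · = 1)).card = Fintype.card ι := by
  refine C.supporting F.level (fun w => F.level_le) (top_unique ?_)
  rw [← F.basis.span_eq]
  refine Submodule.span_mono ?_
  rintro _ ⟨i, rfl⟩
  simp [F.basis_mem]

lemma exists_int_level (F : C.Facet) {x : E} (hx : x ∈ C.lattice) : ∃ n : ℤ, F.level x = n :=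
  F.supporting.1 x hx

lemma exists_eq_basis (F : C.Facet) {w : E} (hw : w ∈ C.verts) (h : F.level w = 1) :
    ∃ i, w = F.basis i := by
  classical
  have himage : Finset.univ.image F.basis = C.verts.filter (F.level · = 1) := by
    refine Finset.eq_of_subset_of_card_le (fun v hv => ?_) ?_
    · obtain ⟨i, -, rfl⟩ := Finset.mem_image.1 hv
      simp [F.basis_mem]
    · rw [F.supporting.2, Finset.card_image_of_injective _ F.basis.injective, Finset.card_univ]
  have hmem : w ∈ Finset.univ.image F.basis := himage ▸ Finset.mem_filter.2 ⟨hw, h⟩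
  obtain ⟨i, -, rfl⟩ := Finset.mem_image.1 hmem
  exact ⟨i, rfl⟩

section Flip

lemma exists_flip (F : C.Facet) (i : ι) : ∃ (G : C.Facet) (k : ℤ), 1 ≤ k ∧
    (∀ j ≠ i, G.basis j = F.basis j) ∧ F.coord i (G.basis i) < 0 ∧
    ∀ w, G.level w = F.level w - k * F.coord i w := by
  have hne : -F.coord i ≠ 0 := fun h => by
    simpa using congrArg (fun l => l (F.basis i)) h
  obtain ⟨t, ht, hle, x, hx, hcoord, hux⟩ := exists_tight_of_ne_zero (fun w => F.level_le) hne
  replace hcoord : F.coord i x < 0 := neg_pos.1 hcoord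
  obtain ⟨b, hbi, hbj⟩ := exists_basis_exchange F.basis hcoord.ne
  have hsum : b.sumCoords = F.level + t • -F.coord i := b.ext fun j => by
    rw [b.sumCoords_self_apply]
    rcases eq_or_ne j i with rfl | hj
    · rw [hbi, hux]
    · simp [hbj j hj, F.coord_basis_of_ne hj]
  have hmem : ∀ j, b j ∈ C.verts := fun j => by
    rcases eq_or_ne j i with rfl | hj
    · exact hbi ▸ hx
    · exact hbj j hj ▸ F.basis_mem j
  let G : C.Facet := ⟨b, hmem, hsum ▸ hle⟩
  have hlevel : ∀ w, G.level w = F.level w - t * F.coord i w := fun w => by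
    simp [level, G, hsum, sub_eq_add_neg]
  obtain ⟨m, hm⟩ := F.exists_int_level (C.verts_subset (F.basis_mem i))
  obtain ⟨n, hn⟩ := G.exists_int_level (C.verts_subset (F.basis_mem i))
  have hk : t = ((m - n : ℤ) : ℝ) := by
    push_cast
    rw [← hm, ← hn, hlevel, F.coord_self]
    ring
  have ht₀ : t ≠ 0 := fun h => by
    obtain ⟨j, rfl⟩ := F.exists_eq_basis hx (by simpa [h] using hux)
    rcases eq_or_ne j i with rfl | hj
    · linarith [F.coord_self j]
    · linarith [F.coord_basis_of_ne hj]
  have hk₁ : 1 ≤ m - n := by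
    have : (0 : ℝ) < (m - n : ℤ) := hk ▸ lt_of_le_of_ne ht ht₀.symm
    exact_mod_cast this
  exact ⟨G, m - n, hk₁, hbj, by simpa [G, hbi] using hcoord, fun w => hk ▸ hlevel w⟩

/-- The facet sharing with `F` all vertices except `F.basis i`. -/
def flip (F : C.Facet) (i : ι) : C.Facet := (F.exists_flip i).choose

/-- The drop, across the ridge opposite to `F.basis i`, of the level of `F.basis i`. -/
def step (F : C.Facet) (i : ι) : ℤ := (F.exists_flip i).choose_spec.choose

/-- The vertex of the neighbouring facet `F.flip i` which does not lie on `F`. -/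
def opp (F : C.Facet) (i : ι) : E := (F.flip i).basis i

@[simp] lemma flip_basis_self (F : C.Facet) (i : ι) : (F.flip i).basis i = F.opp i := rfl

lemma one_le_step (F : C.Facet) (i : ι) : (1 : ℝ) ≤ F.step i := by
  exact_mod_cast (F.exists_flip i).choose_spec.choose_spec.1

lemma flip_basis_of_ne (F : C.Facet) {i j : ι} (h : j ≠ i) :
    (F.flip i).basis j = F.basis j :=
  (F.exists_flip i).choose_spec.choose_spec.2.1 j h

lemma coord_opp_neg (F : C.Facet) (i : ι) : F.coord i (F.opp i) < 0 :=
  (F.exists_flip i).choose_spec.choose_spec.2.2.1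

lemma level_flip (F : C.Facet) (i : ι) (w : E) :
    (F.flip i).level w = F.level w - F.step i * F.coord i w :=
  (F.exists_flip i).choose_spec.choose_spec.2.2.2 w

lemma opp_mem (F : C.Facet) (i : ι) : F.opp i ∈ C.verts := (F.flip i).basis_mem i

lemma level_opp (F : C.Facet) (i : ι) :
    F.level (F.opp i) = 1 + F.step i * F.coord i (F.opp i) := by
  have h₁ : (F.flip i).level (F.opp i) = 1 := (F.flip i).level_basis i
  linarith [F.level_flip i (F.opp i)]

lemma coord_flip_self (F : C.Facet) (i : ι) (w : E) :
    (F.flip i).coord i w = F.coord i w / F.coord i (F.opp i) := by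
  have h : (F.flip i).coord i = (F.coord i (F.opp i))⁻¹ • F.coord i := by
    refine (F.flip i).basis.ext fun j => ?_
    rcases eq_or_ne j i with rfl | hj
    · rw [coord_self, LinearMap.smul_apply, smul_eq_mul, flip_basis_self,
        inv_mul_cancel₀ (F.coord_opp_neg j).ne]
    · rw [coord_basis_of_ne _ hj, F.flip_basis_of_ne hj, LinearMap.smul_apply,
        F.coord_basis_of_ne hj, smul_zero]
  rw [h, LinearMap.smul_apply, smul_eq_mul, inv_mul_eq_div]

lemma coord_flip_of_ne (F : C.Facet) {i l : ι} (hl : l ≠ i) (w : E) :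
    (F.flip i).coord l w = F.coord l w -
      F.coord l (F.opp i) * (F.coord i w / F.coord i (F.opp i)) := by
  have h : (F.flip i).coord l = F.coord l -
      (F.coord l (F.opp i) / F.coord i (F.opp i)) • F.coord i := by
    refine (F.flip i).basis.ext fun j => ?_
    rw [LinearMap.sub_apply, LinearMap.smul_apply, smul_eq_mul]
    rcases eq_or_ne j i with rfl | hj
    · rw [coord_basis_of_ne _ hl.symm, flip_basis_self, div_mul_cancel₀ _ (F.coord_opp_neg j).ne,
        sub_self]
    · have hbasis := F.flip_basis_of_ne hj
      rw [hbasis, F.coord_basis_of_ne hj, mul_zero, sub_zero, ← hbasis]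
      rcases eq_or_ne j l with rfl | hjl
      · rw [coord_self, hbasis, coord_self]
      · rw [coord_basis_of_ne _ hjl, hbasis, F.coord_basis_of_ne hjl]
  rw [h, LinearMap.sub_apply, LinearMap.smul_apply, smul_eq_mul]
  ring

end Flip

section Neighbours

lemma level_flip_le (F : C.Facet) (i : ι) {w : E} (hw : w ∈ C.verts) :
    F.level w - F.step i * F.coord i w ≤ 1 :=
  F.level_flip i w ▸ (F.flip i).level_le hw

lemma exists_int_step_mul_coord (F : C.Facet) (i : ι) {x : E} (hx : x ∈ C.lattice) :
    ∃ n : ℤ, F.step i * F.coord i x = n := by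
  obtain ⟨m, hm⟩ := F.exists_int_level hx
  obtain ⟨n, hn⟩ := (F.flip i).exists_int_level hx
  exact ⟨m - n, by push_cast; linarith [F.level_flip i x]⟩

lemma eq_opp_of_level_flip (F : C.Facet) {i : ι} {w : E} (hw : w ∈ C.verts)
    (h : F.level w - F.step i * F.coord i w = 1) (hlt : F.level w < 1) :
    w = F.opp i := by
  obtain ⟨j, rfl⟩ := (F.flip i).exists_eq_basis hw (F.level_flip i w ▸ h)
  rcases eq_or_ne j i with rfl | hj
  · rfl
  · rw [F.flip_basis_of_ne hj, level_basis] at hlt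
    exact absurd hlt (lt_irrefl 1)

lemma level_flip_lt_of_ne (F : C.Facet) {i : ι} {w : E} (hw : w ∈ C.verts)
    (hne : w ≠ F.opp i) (hlt : F.level w < 1) :
    F.level w - F.step i * F.coord i w < 1 :=
  lt_of_le_of_ne (F.level_flip_le i hw) fun h => hne (F.eq_opp_of_level_flip hw h hlt)

variable (C) in
instance finite_facet : Finite C.Facet := by
  refine Finite.of_injective (β := ι → C.verts) (fun F i => ⟨F.basis i, F.basis_mem i⟩) ?_
  rintro ⟨b, _, _⟩ ⟨b', _, _⟩ h
  obtain rfl : b = b' := Module.Basis.eq_of_apply_eq fun i => congrArg Subtype.val (congrFun h i)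
  rfl

variable (C) in
lemma exists_forall_coord_nonneg (s : E) : ∃ F : C.Facet, ∀ i, 0 ≤ F.coord i s := by
  have := nonempty_facet C
  obtain ⟨F, hF⟩ := Finite.exists_max fun F : C.Facet => F.level s
  refine ⟨F, fun i => ?_⟩
  have h := hF (F.flip i)
  rw [level_flip] at h
  exact nonneg_of_mul_nonneg_right (a := (F.step i : ℝ)) (by linarith)
    (by linarith [F.one_le_step i])

lemma level_eq_one_of_coord_nonneg (F : C.Facet) {x : E} (hx : x ∈ C.lattice) (hne : x ≠ 0)
    (hnonneg : ∀ i, 0 ≤ F.coord i x) (hle : F.level x ≤ 1) : F.level x = 1 := by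
  obtain ⟨p, hp⟩ : ∃ p, F.coord p x ≠ 0 := by
    by_contra! h
    exact hne (F.ext_coord fun i => by rw [h i, map_zero])
  have hpos : 0 < F.level x := F.level_eq_sum x ▸ Finset.sum_pos'
    (fun i _ => hnonneg i) ⟨p, Finset.mem_univ p, (hnonneg p).lt_of_ne' hp⟩
  obtain ⟨n, hn⟩ := F.exists_int_level hx
  rw [hn] at hpos hle ⊢
  norm_cast at hpos hle ⊢
  omega

end Neighbours

section ZeroLevel

/-- The vertices of level zero with respect to a facet. -/
def zeroVerts (F : C.Facet) : Finset E := C.verts.filter (F.level · = 0)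

lemma mem_zeroVerts {F : C.Facet} {w : E} : w ∈ F.zeroVerts ↔ w ∈ C.verts ∧ F.level w = 0 :=
  Finset.mem_filter

/-- A facet is full if it has the maximal possible number `card ι` of level-zero vertices; these
are then the vertices opposite to it in the neighbouring facets. -/
def IsFull (F : C.Facet) : Prop := F.zeroVerts.card = Fintype.card ι

lemma step_mul_coord_of_neg (F : C.Facet) {i : ι} {w : E} (hw : w ∈ F.zeroVerts)
    (hneg : F.coord i w < 0) : F.step i * F.coord i w = -1 := by
  obtain ⟨hwC, h0⟩ := mem_zeroVerts.1 hw
  obtain ⟨n, hn⟩ := F.exists_int_step_mul_coord i (C.verts_subset hwC)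
  have hge : -1 ≤ n := by
    have : (-1 : ℝ) ≤ n := by linarith [F.level_flip_le i hwC]
    exact_mod_cast this
  have hlt : n < 0 := by
    have : (n : ℝ) < 0 := hn ▸ mul_neg_of_pos_of_neg (by linarith [F.one_le_step i]) hneg
    exact_mod_cast this
  rw [hn, show n = -1 by omega]
  simp

lemma eq_opp_of_coord_neg (F : C.Facet) {i : ι} {w : E} (hw : w ∈ F.zeroVerts)
    (hneg : F.coord i w < 0) : w = F.opp i := by
  have h := F.step_mul_coord_of_neg hw hneg
  obtain ⟨hwC, h0⟩ := mem_zeroVerts.1 hw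
  exact F.eq_opp_of_level_flip hwC (by linarith) (by linarith)

lemma exists_coord_neg (F : C.Facet) {w : E} (hw : w ∈ F.zeroVerts) :
    ∃ i, F.coord i w < 0 := by
  obtain ⟨hwC, h0⟩ := mem_zeroVerts.1 hw
  by_contra! hnonneg
  rw [level_eq_sum, Finset.sum_eq_zero_iff_of_nonneg fun i _ => hnonneg i] at h0
  have hw0 : w = 0 := F.ext_coord fun i => by rw [h0 i (Finset.mem_univ i), map_zero]
  exact C.zero_notMem (hw0 ▸ hwC)

lemma exists_eq_opp (F : C.Facet) {w : E} (hw : w ∈ F.zeroVerts) : ∃ i, w = F.opp i :=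
  let ⟨i, hi⟩ := F.exists_coord_neg hw
  ⟨i, F.eq_opp_of_coord_neg hw hi⟩

lemma card_zeroVerts_le_of_forall (F : C.Facet) {J : Finset ι}
    (hJ : ∀ w ∈ F.zeroVerts, ∃ i ∈ J, w = F.opp i) : F.zeroVerts.card ≤ J.card := by
  classical
  refine (Finset.card_le_card fun w hw => ?_).trans (Finset.card_image_le (f := F.opp))
  obtain ⟨i, hi, rfl⟩ := hJ w hw
  exact Finset.mem_image_of_mem _ hi

lemma card_zeroVerts_le (F : C.Facet) : F.zeroVerts.card ≤ Fintype.card ι :=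
  F.card_zeroVerts_le_of_forall fun _ hw =>
    let ⟨i, hi⟩ := F.exists_eq_opp hw
    ⟨i, Finset.mem_univ i, hi⟩

lemma opp_mem_zeroVerts_and_injOn (F : C.Facet) {J : Finset ι}
    (hJ : ∀ w ∈ F.zeroVerts, ∃ i ∈ J, w = F.opp i) (hcard : J.card ≤ F.zeroVerts.card) :
    (∀ i ∈ J, F.opp i ∈ F.zeroVerts) ∧ Set.InjOn F.opp J := by
  classical
  have hsub : F.zeroVerts ⊆ J.image F.opp := fun w hw => by
    obtain ⟨i, hi, rfl⟩ := hJ w hw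
    exact Finset.mem_image_of_mem _ hi
  have heq := Finset.eq_of_subset_of_card_le hsub (Finset.card_image_le.trans hcard)
  refine ⟨fun i hi => heq ▸ Finset.mem_image_of_mem _ hi, Finset.card_image_iff.1 ?_⟩
  exact Finset.card_image_le.antisymm (heq ▸ hcard)

lemma IsFull.opp_mem_zeroVerts {F : C.Facet} (hF : F.IsFull) (i : ι) :
    F.opp i ∈ F.zeroVerts :=
  (F.opp_mem_zeroVerts_and_injOn
    (fun _ hw => let ⟨i, hi⟩ := F.exists_eq_opp hw; ⟨i, Finset.mem_univ i, hi⟩) hF.ge).1 i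
    (Finset.mem_univ i)

lemma IsFull.level_opp {F : C.Facet} (hF : F.IsFull) (i : ι) : F.level (F.opp i) = 0 :=
  (mem_zeroVerts.1 (hF.opp_mem_zeroVerts i)).2

lemma IsFull.opp_injective {F : C.Facet} (hF : F.IsFull) : Function.Injective F.opp := by
  have h := (F.opp_mem_zeroVerts_and_injOn
    (fun _ hw => let ⟨i, hi⟩ := F.exists_eq_opp hw; ⟨i, Finset.mem_univ i, hi⟩) hF.ge).2
  rwa [Finset.coe_univ, Set.injOn_univ] at h

lemma IsFull.coord_opp_nonneg {F : C.Facet} (hF : F.IsFull) {i j : ι} (h : j ≠ i) :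
    0 ≤ F.coord j (F.opp i) := by
  by_contra! hneg
  exact h (hF.opp_injective (F.eq_opp_of_coord_neg (hF.opp_mem_zeroVerts i) hneg)).symm

lemma level_opp_eq_zero_of_ne (F : C.Facet) (hF : Fintype.card ι ≤ F.zeroVerts.card + 1)
    {i₀ : ι} (hi₀ : F.level (F.opp i₀) ≠ 0) {i : ι} (hi : i ≠ i₀) :
    F.level (F.opp i) = 0 ∧ ∀ j ≠ i, 0 ≤ F.coord j (F.opp i) := by
  classical
  have hJ : ∀ w ∈ F.zeroVerts, ∃ i ∈ Finset.univ.erase i₀, w = F.opp i := fun w hw => by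
    obtain ⟨i, rfl⟩ := F.exists_eq_opp hw
    refine ⟨i, Finset.mem_erase.2 ⟨?_, Finset.mem_univ i⟩, rfl⟩
    rintro rfl
    exact hi₀ (mem_zeroVerts.1 hw).2
  have hcard : (Finset.univ.erase i₀).card ≤ F.zeroVerts.card := by
    rw [Finset.card_erase_of_mem (Finset.mem_univ i₀), Finset.card_univ]
    omega
  obtain ⟨hmem, hinj⟩ := F.opp_mem_zeroVerts_and_injOn hJ hcard
  have hi' : i ∈ Finset.univ.erase i₀ := by simp [hi]
  refine ⟨(mem_zeroVerts.1 (hmem i hi')).2, fun j hj => ?_⟩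
  by_contra! hneg
  have heq := F.eq_opp_of_coord_neg (hmem i hi') hneg
  rcases eq_or_ne j i₀ with rfl | hj₀
  · exact hi₀ (heq ▸ (mem_zeroVerts.1 (hmem i hi')).2)
  · exact hj (hinj (by simpa using hi) (by simpa using hj₀) heq).symm

lemma eq_of_two_coord_neg (F : C.Facet) (hF : Fintype.card ι ≤ F.zeroVerts.card + 1)
    {w w' : E} (hw : w ∈ F.zeroVerts) (hw' : w' ∈ F.zeroVerts) {i j i' j' : ι}
    (hij : i ≠ j) (hij' : i' ≠ j') (hi : F.coord i w < 0) (hj : F.coord j w < 0)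
    (hi' : F.coord i' w' < 0) (hj' : F.coord j' w' < 0) : w = w' := by
  classical
  by_contra hne
  have hwi := F.eq_opp_of_coord_neg hw hi
  have hwj := F.eq_opp_of_coord_neg hw hj
  have hwi' := F.eq_opp_of_coord_neg hw' hi'
  have hwj' := F.eq_opp_of_coord_neg hw' hj'
  have hjj' : j ≠ j' := by rintro rfl; exact hne (hwj.trans hwj'.symm)
  have hij₁ : i ≠ j' := by rintro rfl; exact hne (hwi.trans hwj'.symm)
  have hij₂ : i' ≠ j := by rintro rfl; exact hne (hwj.trans hwi'.symm)
  have hJ : ∀ v ∈ F.zeroVerts, ∃ l ∈ ({j, j'} : Finset ι)ᶜ, v = F.opp l := fun v hv => by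
    obtain ⟨l, rfl⟩ := F.exists_eq_opp hv
    rcases eq_or_ne l j with rfl | hlj
    · exact ⟨i, by simp [hij, hij₁], hwj.symm.trans hwi⟩
    rcases eq_or_ne l j' with rfl | hlj'
    · exact ⟨i', by simp [hij', hij₂], hwj'.symm.trans hwi'⟩
    · exact ⟨l, by simp [hlj, hlj'], rfl⟩
  have hle := F.card_zeroVerts_le_of_forall hJ
  have h2 : ({j, j'} : Finset ι).card ≤ Fintype.card ι := Finset.card_le_univ _
  rw [Finset.card_compl, Finset.card_pair hjj'] at hle
  rw [Finset.card_pair hjj'] at h2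
  omega

end ZeroLevel

end Facet

section Deficit

/-- The configuration has one vertex less than the maximal possible number `3 * card ι`. -/
def IsAlmostMaximal (C : VertexConfig ι E) : Prop := C.verts.card + 1 = 3 * Fintype.card ι

/-- The sum of all vertices. -/
def vertexSum (C : VertexConfig ι E) : E := ∑ w ∈ C.verts, w

namespace Facet

/-- The amount by which the level of a point falls short of `-1`. -/
def deficit (F : C.Facet) (w : E) : ℝ := max 0 (-1 - F.level w)

lemma deficit_nonneg (F : C.Facet) (w : E) : 0 ≤ F.deficit w := le_max_left _ _

lemma le_deficit (F : C.Facet) (w : E) : -1 - F.level w ≤ F.deficit w := le_max_right _ _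

lemma deficit_eq (F : C.Facet) {w : E} (hw : w ∈ C.verts) :
    F.deficit w = -1 - F.level w + 2 * (if F.level w = 1 then 1 else 0) +
      if F.level w = 0 then 1 else 0 := by
  obtain ⟨n, hn⟩ := F.exists_int_level (C.verts_subset hw)
  have hle : n ≤ 1 := by exact_mod_cast hn ▸ F.level_le hw
  obtain rfl | rfl | h : n = 1 ∨ n = 0 ∨ n ≤ -1 := by omega
  · norm_num [deficit, hn]
  · norm_num [deficit, hn]
  · have h' : (n : ℝ) ≤ -1 := by exact_mod_cast h
    rw [deficit, hn, max_eq_right (by linarith), if_neg (by linarith), if_neg (by linarith)]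
    ring

lemma sum_deficit (F : C.Facet) : ∑ w ∈ C.verts, F.deficit w =
    2 * Fintype.card ι + F.zeroVerts.card - C.verts.card - F.level C.vertexSum := by
  rw [Finset.sum_congr rfl fun w hw => F.deficit_eq hw, Finset.sum_add_distrib,
    Finset.sum_add_distrib, Finset.sum_sub_distrib, ← Finset.mul_sum, Finset.sum_boole,
    Finset.sum_boole, F.supporting.2, ← map_sum, ← vertexSum, ← zeroVerts]
  simp
  ring

lemma sum_deficit_of_isAlmostMaximal (hC : C.IsAlmostMaximal) (F : C.Facet) :
    ∑ w ∈ C.verts, F.deficit w =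
      F.zeroVerts.card + 1 - Fintype.card ι - F.level C.vertexSum := by
  have h : (C.verts.card : ℝ) + 1 = 3 * Fintype.card ι := by exact_mod_cast hC
  linarith [F.sum_deficit]

lemma deficit_le (hC : C.IsAlmostMaximal) (F : C.Facet) {w : E} (hw : w ∈ C.verts) :
    F.deficit w ≤ F.zeroVerts.card + 1 - Fintype.card ι - F.level C.vertexSum :=
  sum_deficit_of_isAlmostMaximal hC F ▸
    Finset.single_le_sum (fun v _ => F.deficit_nonneg v) hw

lemma deficit_add_deficit_le (hC : C.IsAlmostMaximal) (F : C.Facet) {v w : E}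
    (hv : v ∈ C.verts) (hw : w ∈ C.verts) (hne : v ≠ w) : F.deficit v + F.deficit w ≤
      F.zeroVerts.card + 1 - Fintype.card ι - F.level C.vertexSum :=
  sum_deficit_of_isAlmostMaximal hC F ▸
    Finset.add_le_sum (fun u _ => F.deficit_nonneg u) hv hw hne

lemma cast_card_zeroVerts_le (F : C.Facet) : (F.zeroVerts.card : ℝ) ≤ Fintype.card ι := by
  exact_mod_cast F.card_zeroVerts_le

lemma level_vertexSum_le_one (hC : C.IsAlmostMaximal) (F : C.Facet) :
    F.level C.vertexSum ≤ 1 := by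
  have h : 0 ≤ ∑ w ∈ C.verts, F.deficit w := Finset.sum_nonneg fun w _ => F.deficit_nonneg w
  linarith [sum_deficit_of_isAlmostMaximal hC F, F.cast_card_zeroVerts_le]

lemma isFull_of_level_vertexSum_eq_one (hC : C.IsAlmostMaximal) (F : C.Facet)
    (h1 : F.level C.vertexSum = 1) : F.IsFull := by
  have h : 0 ≤ ∑ w ∈ C.verts, F.deficit w := Finset.sum_nonneg fun w _ => F.deficit_nonneg w
  rw [sum_deficit_of_isAlmostMaximal hC F, h1] at h
  have hge : (Fintype.card ι : ℝ) ≤ F.zeroVerts.card := by linarith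
  exact F.card_zeroVerts_le.antisymm (by exact_mod_cast hge)

lemma neg_one_le_level_of_level_vertexSum_eq_one (hC : C.IsAlmostMaximal) (F : C.Facet)
    (h1 : F.level C.vertexSum = 1) {w : E} (hw : w ∈ C.verts) : -1 ≤ F.level w := by
  linarith [deficit_le hC F hw, F.le_deficit w, F.cast_card_zeroVerts_le]

lemma card_le_card_zeroVerts_add_one (hC : C.IsAlmostMaximal) (F : C.Facet)
    (h0 : F.level C.vertexSum = 0) : Fintype.card ι ≤ F.zeroVerts.card + 1 := by
  have h : 0 ≤ ∑ w ∈ C.verts, F.deficit w := Finset.sum_nonneg fun w _ => F.deficit_nonneg w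
  rw [sum_deficit_of_isAlmostMaximal hC F, h0] at h
  have hge : (Fintype.card ι : ℝ) ≤ F.zeroVerts.card + 1 := by linarith
  exact_mod_cast hge

lemma neg_two_le_level (hC : C.IsAlmostMaximal) (F : C.Facet)
    (h0 : F.level C.vertexSum = 0) {w : E} (hw : w ∈ C.verts) : -2 ≤ F.level w := by
  linarith [deficit_le hC F hw, F.le_deficit w, F.cast_card_zeroVerts_le]

lemma isFull_of_level_lt (hC : C.IsAlmostMaximal) (F : C.Facet)
    (h0 : F.level C.vertexSum = 0) {w : E} (hw : w ∈ C.verts) (hlt : F.level w < -1) :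
    F.IsFull := by
  have h : (Fintype.card ι : ℝ) < F.zeroVerts.card + 1 := by
    linarith [deficit_le hC F hw, F.le_deficit w]
  exact F.card_zeroVerts_le.antisymm (Nat.lt_succ_iff.1 (by exact_mod_cast h))

lemma level_le_neg_two (F : C.Facet) {w : E} (hw : w ∈ C.verts) (hlt : F.level w < -1) :
    F.level w ≤ -2 := by
  obtain ⟨n, hn⟩ := F.exists_int_level (C.verts_subset hw)
  rw [hn] at hlt ⊢
  have hn' : n < -1 := by exact_mod_cast hlt
  exact_mod_cast (by omega : n ≤ -2)

lemma neg_one_le_level_of_ne (hC : C.IsAlmostMaximal) (F : C.Facet)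
    (h0 : F.level C.vertexSum = 0) {v w : E} (hv : v ∈ C.verts) (hw : w ∈ C.verts)
    (hne : w ≠ v) (hlt : F.level v < -1) : -1 ≤ F.level w := by
  linarith [deficit_add_deficit_le hC F hv hw hne.symm, F.le_deficit v, F.le_deficit w,
    F.level_le_neg_two hv hlt, F.cast_card_zeroVerts_le]

end Facet

end Deficit

/-! ### Special directions and hexagons -/

section Special

namespace Facet

lemma step_eq_one_of_level_opp {F : C.Facet} {i : ι}
    (h : (F.flip i).level ((F.flip i).opp i) = 0) : F.step i = 1 := by
  set w := (F.flip i).opp i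
  have hw : w ∈ C.verts := (F.flip i).opp_mem i
  have hpos : 0 < F.coord i w := by
    have h₁ := (F.flip i).coord_opp_neg i
    rw [coord_flip_self] at h₁
    exact (div_neg_iff.1 h₁).elim (·.1) fun h₂ => absurd h₂.2 (F.coord_opp_neg i).not_gt
  rw [level_flip, sub_eq_zero] at h
  obtain ⟨n, hn⟩ := F.exists_int_level (C.verts_subset hw)
  have hn₀ : 0 < n := by
    have : (0 : ℝ) < n := by rw [← hn, h]; nlinarith [F.one_le_step i]
    exact_mod_cast this
  have hn₁ : n ≤ 1 := by exact_mod_cast hn ▸ F.level_le hw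
  have h1 : F.level w = 1 := by rw [hn, show n = 1 by omega]; simp
  obtain ⟨j, hj⟩ := F.exists_eq_basis hw h1
  rcases eq_or_ne j i with rfl | hji
  · rw [h1, hj, coord_self, mul_one] at h
    exact_mod_cast h.symm
  · rw [hj, F.coord_basis_of_ne hji] at hpos
    exact absurd hpos (lt_irrefl 0)

lemma eq_basis_or_eq_opp_or_level_le (F : C.Facet) {w : E} (hw : w ∈ C.verts) :
    (∃ i, w = F.basis i) ∨ (∃ i, w = F.opp i) ∨ F.level w ≤ -1 := by
  obtain ⟨n, hn⟩ := F.exists_int_level (C.verts_subset hw)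
  have hle : n ≤ 1 := by exact_mod_cast hn ▸ F.level_le hw
  obtain rfl | rfl | h : n = 1 ∨ n = 0 ∨ n ≤ -1 := by omega
  · exact .inl (F.exists_eq_basis hw (by simpa using hn))
  · exact .inr (.inl (F.exists_eq_opp (mem_zeroVerts.2 ⟨hw, by simpa using hn⟩)))
  · exact .inr (.inr (hn ▸ by exact_mod_cast h))

namespace IsFull

variable {F : C.Facet} {i j : ι}

lemma step_eq_one (h : (F.flip i).IsFull) : F.step i = 1 :=
  step_eq_one_of_level_opp (h.level_opp i)

lemma step_mul_coord_opp (hF : F.IsFull) (i : ι) : F.step i * F.coord i (F.opp i) = -1 := by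
  linarith [F.level_opp i, hF.level_opp i]

lemma coord_opp_self (hF : F.IsFull) (hi : F.step i = 1) : F.coord i (F.opp i) = -1 := by
  simpa [hi] using hF.step_mul_coord_opp i

lemma level_opp_sub_basis (hF : F.IsFull) (i j : ι) : F.level (F.opp i - F.basis j) = -1 := by
  rw [map_sub, hF.level_opp, level_basis, zero_sub]

lemma opp_eq_sub_of_one_le_coord (hF : F.IsFull) (hij : i ≠ j) (h : 1 ≤ F.coord i (F.opp j)) :
    F.opp j = F.basis i - F.basis j ∧ F.step j = 1 := by
  classical
  have hnn : ∀ l ∈ (Finset.univ.erase j).erase i, 0 ≤ F.coord l (F.opp j) := fun l hl =>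
    hF.coord_opp_nonneg (Finset.ne_of_mem_erase (Finset.mem_of_mem_erase hl))
  have hsum := hF.level_opp j
  rw [level_eq_sum, ← Finset.add_sum_erase _ _ (Finset.mem_univ j),
    ← Finset.add_sum_erase _ _ (Finset.mem_erase.2 ⟨hij, Finset.mem_univ i⟩)] at hsum
  have hrest := Finset.sum_nonneg hnn
  have hself := hF.step_mul_coord_opp j
  have hge : -1 ≤ F.coord j (F.opp j) := by nlinarith [F.one_le_step j, F.coord_opp_neg j]
  have hj : F.coord j (F.opp j) = -1 := by linarith
  have hi : F.coord i (F.opp j) = 1 := by linarith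
  have hzero := (Finset.sum_eq_zero_iff_of_nonneg hnn).1 (by linarith)
  refine ⟨F.ext_coord fun l => ?_, ?_⟩
  · rw [map_sub]
    rcases eq_or_ne l j with rfl | hlj
    · rw [hj, F.coord_basis_of_ne hij, coord_self, zero_sub]
    rcases eq_or_ne l i with rfl | hli
    · rw [hi, F.coord_basis_of_ne hij.symm, coord_self, sub_zero]
    · rw [hzero l (by simp [hli, hlj]), F.coord_basis_of_ne hli.symm,
        F.coord_basis_of_ne hlj.symm, sub_zero]
  · rw [hj] at hself
    exact_mod_cast (by linarith : (F.step j : ℝ) = 1)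

end IsFull

end Facet

/-- A vector `dir` together with its maximal level `height` on the facets, such that all facets
attaining the maximum are full and have the same set `deep` of vertices of level less than `-1`. -/
structure SpecialDirection (C : VertexConfig ι E) where
  dir : E
  height : ℝ
  deep : Set E
  level_dir_le : ∀ F : C.Facet, F.level dir ≤ height
  isFull : ∀ F : C.Facet, F.level dir = height → F.IsFull
  mem_deep_iff : ∀ F : C.Facet, F.level dir = height → ∀ w ∈ C.verts, w ∈ deep ↔ F.level w < -1

namespace Facet

/-- The facet attains the maximum in the definition of the special direction `K`, that is, its cone
contains `K.dir`. -/
def IsSpecial (F : C.Facet) (K : C.SpecialDirection) : Prop := F.level K.dir = K.height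

namespace IsSpecial

variable {K : C.SpecialDirection} {F : C.Facet} {i j : ι} {w : E}

lemma isFull (hF : F.IsSpecial K) : F.IsFull := K.isFull F hF

lemma flip (hF : F.IsSpecial K) (hi : F.coord i K.dir = 0) : (F.flip i).IsSpecial K := by
  rw [IsSpecial, level_flip, hi, mul_zero, sub_zero, hF]

lemma coord_dir_nonneg (hF : F.IsSpecial K) (i : ι) : 0 ≤ F.coord i K.dir := by
  have h := K.level_dir_le (F.flip i)
  rw [level_flip, hF] at h
  exact nonneg_of_mul_nonneg_right (a := (F.step i : ℝ)) (by linarith)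
    (by linarith [F.one_le_step i])

lemma step_eq_one (hF : F.IsSpecial K) (hi : F.coord i K.dir = 0) : F.step i = 1 :=
  (hF.flip hi).isFull.step_eq_one

lemma coord_opp_self (hF : F.IsSpecial K) (hi : F.coord i K.dir = 0) :
    F.coord i (F.opp i) = -1 :=
  hF.isFull.coord_opp_self (hF.step_eq_one hi)

lemma exists_int_coord (hF : F.IsSpecial K) (hi : F.coord i K.dir = 0) {x : E}
    (hx : x ∈ C.lattice) : ∃ n : ℤ, F.coord i x = n := by
  simpa [hF.step_eq_one hi] using F.exists_int_step_mul_coord i hx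

lemma level_flip (hF : F.IsSpecial K) (hi : F.coord i K.dir = 0) (w : E) :
    (F.flip i).level w = F.level w - F.coord i w := by
  simpa [hF.step_eq_one hi] using F.level_flip i w

lemma coord_dir_flip (hi : F.coord i K.dir = 0) (l : ι) :
    (F.flip i).coord l K.dir = F.coord l K.dir := by
  rcases eq_or_ne l i with rfl | hl
  · rw [coord_flip_self, hi, zero_div]
  · rw [F.coord_flip_of_ne hl, hi, zero_div, mul_zero, sub_zero]

lemma level_flip_mem_Ico (hF : F.IsSpecial K) (hi : F.coord i K.dir = 0) (hw : w ∈ C.verts)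
    (hne : w ≠ F.opp i) (hge : -1 ≤ F.level w) (hlt : F.level w < 1) :
    F.level w - F.coord i w ∈ Set.Ico (-1) 1 := by
  rw [← hF.level_flip hi]
  refine ⟨?_, ?_⟩
  · have hdeep : w ∉ K.deep := fun h => absurd ((K.mem_deep_iff F hF w hw).1 h) hge.not_gt
    exact not_lt.1 fun h => hdeep ((K.mem_deep_iff _ (hF.flip hi) w hw).2 h)
  · rw [F.level_flip]
    exact F.level_flip_lt_of_ne hw hne hlt

lemma coord_eq_zero_or_one (hF : F.IsSpecial K) (hi : F.coord i K.dir = 0) (hw : w ∈ C.verts)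
    (h0 : F.level w = 0) (hne : w ≠ F.opp i) : F.coord i w = 0 ∨ F.coord i w = 1 := by
  obtain ⟨hge, hlt⟩ := hF.level_flip_mem_Ico hi hw hne (by linarith) (by linarith)
  obtain ⟨n, hn⟩ := hF.exists_int_coord hi (C.verts_subset hw)
  rw [h0, hn] at hge hlt
  have h₁ : n ≤ 1 := by exact_mod_cast (by linarith : (n : ℝ) ≤ 1)
  have h₂ : -1 < n := by exact_mod_cast (by linarith : (-1 : ℝ) < n)
  rw [hn]
  exact_mod_cast (by omega : n = 0 ∨ n = 1)

lemma coord_eq_zero_or_neg_one (hF : F.IsSpecial K) (hi : F.coord i K.dir = 0)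
    (hw : w ∈ C.verts) (h1 : F.level w = -1) : F.coord i w = 0 ∨ F.coord i w = -1 := by
  have hne : w ≠ F.opp i := fun h => by linarith [h ▸ hF.isFull.level_opp i]
  obtain ⟨hge, hlt⟩ := hF.level_flip_mem_Ico hi hw hne h1.ge (by linarith)
  obtain ⟨n, hn⟩ := hF.exists_int_coord hi (C.verts_subset hw)
  rw [h1, hn] at hge hlt
  have h₁ : n ≤ 0 := by exact_mod_cast (by linarith : (n : ℝ) ≤ 0)
  have h₂ : -2 < n := by exact_mod_cast (by linarith : (-2 : ℝ) < n)
  rw [hn]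
  exact_mod_cast (by omega : n = 0 ∨ n = -1)

lemma opp_eq_sub (hF : F.IsSpecial K) (hi : F.coord i K.dir = 0) (hij : i ≠ j)
    (h : F.coord i (F.opp j) ≠ 0) : F.opp j = F.basis i - F.basis j ∧ F.step j = 1 := by
  have hne : F.opp j ≠ F.opp i := fun h => hij (hF.isFull.opp_injective h.symm)
  have h1 := (hF.coord_eq_zero_or_one hi (F.opp_mem j) (hF.isFull.level_opp j) hne).resolve_left h
  exact hF.isFull.opp_eq_sub_of_one_le_coord hij h1.ge

lemma exists_eq_opp_sub (hF : F.IsSpecial K) (hi : F.coord i K.dir = 0) (hw : w ∈ C.verts)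
    (h1 : F.level w = -1) (hc : F.coord i w = -1) :
    ∃ l ≠ i, w = F.opp i - F.basis l ∧ F.opp l = F.basis i - F.basis l := by
  have hG := hF.flip hi
  have h0 : (F.flip i).level w = 0 := by rw [hF.level_flip hi, h1, hc, sub_self]
  obtain ⟨l, hl⟩ := (F.flip i).exists_eq_opp (mem_zeroVerts.2 ⟨hw, h0⟩)
  have hcoord : (F.flip i).coord i w = 1 := by
    rw [coord_flip_self, hc, hF.coord_opp_self hi, div_self (by norm_num)]
  have hli : l ≠ i := by
    rintro rfl
    linarith [hl ▸ (F.flip l).coord_opp_neg l]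
  have hw' := (hG.opp_eq_sub (by rwa [coord_dir_flip hi]) hli.symm
    (by rw [← hl, hcoord]; exact one_ne_zero)).1
  rw [← hl, flip_basis_self, F.flip_basis_of_ne hli] at hw'
  refine ⟨l, hli, hw', (hF.opp_eq_sub hi hli.symm fun h4 => ?_).1⟩
  have hzero : F.opp l ∈ (F.flip i).zeroVerts :=
    mem_zeroVerts.2 ⟨F.opp_mem l, by rw [hF.level_flip hi, hF.isFull.level_opp, h4, sub_zero]⟩
  have hneg : (F.flip i).coord l (F.opp l) < 0 := by
    rw [F.coord_flip_of_ne hli, h4, zero_div, mul_zero, sub_zero]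
    exact F.coord_opp_neg l
  rw [(F.flip i).eq_opp_of_coord_neg hzero hneg, ← hl, hc] at h4
  norm_num at h4

lemma opp_sub_mem (hF : F.IsSpecial K) (hi : F.coord i K.dir = 0) (hij : j ≠ i)
    (hx : F.opp j = F.basis i - F.basis j) : F.opp i - F.basis j ∈ C.verts := by
  have hG := hF.flip hi
  by_cases h : (F.flip i).coord i ((F.flip i).opp j) = 0
  · have h3 : F.coord i ((F.flip i).opp j) = 0 := by
      rwa [coord_flip_self, hF.coord_opp_self hi, div_neg, div_one, neg_eq_zero] at h
    have h4 : F.level ((F.flip i).opp j) = 0 := by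
      have := hG.isFull.level_opp j
      rwa [hF.level_flip hi, h3, sub_zero] at this
    have h5 : F.coord j ((F.flip i).opp j) < 0 := by
      have := (F.flip i).coord_opp_neg j
      rwa [F.coord_flip_of_ne hij, h3, zero_div, mul_zero, sub_zero] at this
    rw [F.eq_opp_of_coord_neg (mem_zeroVerts.2 ⟨(F.flip i).opp_mem j, h4⟩) h5, hx, map_sub,
      coord_self, F.coord_basis_of_ne hij] at h3
    norm_num at h3
  · have h3 := (hG.opp_eq_sub (by rwa [coord_dir_flip hi]) hij.symm h).1
    rw [F.flip_basis_of_ne hij, flip_basis_self] at h3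
    exact h3 ▸ (F.flip i).opp_mem j

end IsSpecial

/-- Two vertices `F.basis i` and `F.basis a` of a special facet span a hexagon of vertices
`± F.basis i`, `± F.basis a`, `± (F.basis a - F.basis i)`; see `IsHexPair.symm` and
`IsHexPair.neg_mem`. -/
structure IsHexPair (F : C.Facet) (K : C.SpecialDirection) (i a : ι) : Prop where
  left : F.coord i K.dir = 0
  right : F.coord a K.dir = 0
  ne : a ≠ i
  opp_eq : F.opp i = F.basis a - F.basis i

namespace IsHexPair

variable {K : C.SpecialDirection} {F : C.Facet} {i a j : ι} {w : E}

lemma symm (h : F.IsHexPair K i a) (hF : F.IsSpecial K) : F.IsHexPair K a i := by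
  refine ⟨h.right, h.left, h.ne.symm, ?_⟩
  have hmem := hF.opp_sub_mem h.right h.ne.symm h.opp_eq
  by_cases hc : F.coord i (F.opp a) = 0
  · obtain ⟨l, -, hl, -⟩ := hF.exists_eq_opp_sub h.left hmem (hF.isFull.level_opp_sub_basis a i)
      (by rw [map_sub, hc, coord_self, zero_sub])
    have hopp : F.opp a = F.basis a - F.basis l := by
      rw [eq_add_of_sub_eq hl, h.opp_eq]
      abel
    have hneg := F.coord_opp_neg a
    rw [hopp, map_sub, coord_self] at hneg
    rcases eq_or_ne l a with rfl | hla
    · rw [coord_self, sub_self] at hneg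
      exact absurd hneg (lt_irrefl 0)
    · rw [F.coord_basis_of_ne hla] at hneg
      norm_num at hneg
  · exact (hF.opp_eq_sub h.left h.ne.symm hc).1

lemma neg_mem (h : F.IsHexPair K i a) (hF : F.IsSpecial K) : -F.basis i ∈ C.verts := by
  have hmem := hF.opp_sub_mem h.left h.ne (h.symm hF).opp_eq
  rwa [h.opp_eq, sub_sub_cancel_left] at hmem

lemma eq_neg_of_coord_ne_zero (h : F.IsHexPair K i a) (hF : F.IsSpecial K) (hw : w ∈ C.verts)
    (h1 : F.level w = -1) (hc : F.coord i w ≠ 0) : w = -F.basis i := by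
  obtain ⟨l, -, hl, -⟩ := hF.exists_eq_opp_sub h.left hw h1
    ((hF.coord_eq_zero_or_neg_one h.left hw h1).resolve_left hc)
  rw [h.opp_eq] at hl
  obtain rfl : l = a := by
    by_contra hla
    have := hF.coord_eq_zero_or_neg_one h.right hw h1
    rw [hl, map_sub, map_sub, coord_self, F.coord_basis_of_ne h.ne.symm,
      F.coord_basis_of_ne hla] at this
    norm_num at this
  rw [hl]
  abel

lemma eq_of_coord_opp_ne_zero (h : F.IsHexPair K i a) (hF : F.IsSpecial K) (hji : j ≠ i)
    (hc : F.coord i (F.opp j) ≠ 0) : j = a := by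
  have hopp := (hF.opp_eq_sub h.left hji.symm hc).1
  have hmem := hF.opp_sub_mem h.left hji hopp
  by_contra hne
  have := hF.coord_eq_zero_or_neg_one h.right hmem (hF.isFull.level_opp_sub_basis i j)
  rw [h.opp_eq, map_sub, map_sub, coord_self, F.coord_basis_of_ne h.ne.symm,
    F.coord_basis_of_ne hne] at this
  norm_num at this

end IsHexPair

/-- `F.basis i` belongs to a hexagon; see `IsHexPair`. -/
def IsHexIndex (F : C.Facet) (K : C.SpecialDirection) (i : ι) : Prop := ∃ a, F.IsHexPair K i a

namespace IsSpecial

variable {K : C.SpecialDirection} {F : C.Facet} {i a : ι} {w : E}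

lemma coord_opp_eq_zero_of_not_isHexIndex (hF : F.IsSpecial K) (hi : F.coord i K.dir = 0)
    (hn : ¬ F.IsHexIndex K i) (ha : F.coord a K.dir = 0) (hai : a ≠ i) :
    F.coord a (F.opp i) = 0 := by
  by_contra h
  exact hn ⟨a, hi, ha, hai, (hF.opp_eq_sub ha hai h).1⟩

lemma exists_eq_opp_sub_of_not_isHexIndex (hF : F.IsSpecial K) (hi : F.coord i K.dir = 0)
    (hn : ¬ F.IsHexIndex K i) (hw : w ∈ C.verts) (h1 : F.level w = -1)
    (hc : F.coord i w ≠ 0) : ∃ l, F.coord l K.dir ≠ 0 ∧ w = F.opp i - F.basis l ∧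
      F.opp l = F.basis i - F.basis l ∧ F.step l = 1 := by
  obtain ⟨l, hli, hl, hopp⟩ := hF.exists_eq_opp_sub hi hw h1
    ((hF.coord_eq_zero_or_neg_one hi hw h1).resolve_left hc)
  have hcl : F.coord i (F.opp l) ≠ 0 := by
    rw [hopp, map_sub, coord_self, F.coord_basis_of_ne hli, sub_zero]
    exact one_ne_zero
  refine ⟨l, fun hl₀ => hn ⟨l, IsHexPair.symm ⟨hl₀, hi, hli.symm, hopp⟩ hF⟩, hl, hopp,
    (hF.opp_eq_sub hi hli.symm hcl).2⟩

open Classical in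
lemma even_card_isHexIndex (hF : F.IsSpecial K) :
    Even (Finset.univ.filter (F.IsHexIndex K)).card := by
  choose! f hf using fun i (hi : F.IsHexIndex K i) => hi
  have hmem : ∀ i, i ∈ Finset.univ.filter (F.IsHexIndex K) ↔ F.IsHexIndex K i := by simp
  have hfm : ∀ i, F.IsHexIndex K i → F.IsHexIndex K (f i) := fun i hi => ⟨i, (hf i hi).symm hF⟩
  have hinv : ∀ i, F.IsHexIndex K i → f (f i) = i := fun i hi => by
    have h := (hf (f i) (hfm i hi)).opp_eq
    rw [((hf i hi).symm hF).opp_eq] at h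
    exact (F.basis.injective (sub_left_injective h)).symm
  exact even_card_of_involution (f := f) (fun i hi => (hmem _).2 (hfm i ((hmem i).1 hi)))
    (fun i hi => (hf i ((hmem i).1 hi)).ne) (fun i hi => hinv i ((hmem i).1 hi))

end IsSpecial

end Facet

end Special

section Counting

namespace Facet

open Classical in
/-- The vertices of negative level which are not accounted for by the hexagons of `IsHexPair`. -/
def residualVerts (F : C.Facet) (K : C.SpecialDirection) : Finset E :=
  C.verts.filter fun w => F.level w ≤ -1 ∧ ∀ i, F.IsHexIndex K i → w ≠ -F.basis i

/-- The vertices of the configuration consist of hexagons, filling all coordinate directions of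
the facet `F` except `p` and `q`, and of the five points `F.basis p`, `F.basis q`, `F.opp p`,
`F.opp q` and `v`. -/
structure IsHexSplit (F : C.Facet) (p q : ι) (v : E) : Prop where
  ne : p ≠ q
  exists_partner : ∀ i, i ≠ p → i ≠ q → ∃ a, a ≠ i ∧ a ≠ p ∧ a ≠ q ∧
    F.opp i = F.basis a - F.basis i ∧ F.opp a = F.basis i - F.basis a
  step_eq_one : ∀ i, i ≠ p → i ≠ q → F.step i = 1
  mem_verts_iff : ∀ w, w ∈ C.verts ↔
    w ∈ ({F.basis p, F.basis q, F.opp p, F.opp q, v} : Set E) ∨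
      ∃ i, i ≠ p ∧ i ≠ q ∧ (w = F.basis i ∨ w = -F.basis i ∨ w = F.opp i)

lemma mem_residualVerts {F : C.Facet} {K : C.SpecialDirection} {w : E} : w ∈ F.residualVerts K ↔
    w ∈ C.verts ∧ F.level w ≤ -1 ∧ ∀ i, F.IsHexIndex K i → w ≠ -F.basis i := by
  classical exact Finset.mem_filter

namespace IsSpecial

variable {K : C.SpecialDirection} {F : C.Facet} {p q : ι} {w : E}

lemma neg_basis_mem (hF : F.IsSpecial K) {i : ι} (hi : F.IsHexIndex K i) :
    -F.basis i ∈ C.verts :=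
  hi.elim fun _ h => h.neg_mem hF

open Classical in
lemma verts_eq_union (hF : F.IsSpecial K) : C.verts =
    Finset.univ.image F.basis ∪ (Finset.univ.image F.opp ∪
      ((Finset.univ.filter (F.IsHexIndex K)).image (-F.basis ·) ∪ F.residualVerts K)) := by
  ext w
  simp only [mem_residualVerts, Finset.mem_union, Finset.mem_image, Finset.mem_univ, true_and,
    Finset.mem_filter]
  constructor
  · intro hw
    rcases F.eq_basis_or_eq_opp_or_level_le hw with ⟨i, rfl⟩ | ⟨i, rfl⟩ | h
    · exact .inl ⟨i, rfl⟩
    · exact .inr (.inl ⟨i, rfl⟩)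
    · by_cases hx : ∀ i, F.IsHexIndex K i → w ≠ -F.basis i
      · exact .inr (.inr (.inr ⟨hw, h, hx⟩))
      · push Not at hx
        obtain ⟨i, hi, rfl⟩ := hx
        exact .inr (.inr (.inl ⟨i, hi, rfl⟩))
  · rintro (⟨i, rfl⟩ | ⟨i, rfl⟩ | ⟨i, hi, rfl⟩ | h)
    exacts [F.basis_mem i, F.opp_mem i, hF.neg_basis_mem hi, h.1]

open Classical in
lemma card_verts (hF : F.IsSpecial K) : C.verts.card = 2 * Fintype.card ι +
    (Finset.univ.filter (F.IsHexIndex K)).card + (F.residualVerts K).card := by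
  have hneg : ∀ w ∈ (Finset.univ.filter (F.IsHexIndex K)).image (-F.basis ·) ∪ F.residualVerts K,
      F.level w ≤ -1 := by
    intro w hw
    rcases Finset.mem_union.1 hw with h | h
    · obtain ⟨i, -, rfl⟩ := Finset.mem_image.1 h
      simp
    · exact (mem_residualVerts.1 h).2.1
  have hopp : ∀ w ∈ Finset.univ.image F.opp, F.level w = 0 := by
    intro w hw
    obtain ⟨i, -, rfl⟩ := Finset.mem_image.1 hw
    exact hF.isFull.level_opp i
  have hinj : Function.Injective (-F.basis ·) := neg_injective.comp F.basis.injective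
  rw [hF.verts_eq_union, Finset.card_union_of_disjoint, Finset.card_union_of_disjoint,
    Finset.card_union_of_disjoint, Finset.card_image_of_injective _ F.basis.injective,
    Finset.card_image_of_injective _ hF.isFull.opp_injective,
    Finset.card_image_of_injective _ hinj, Finset.card_univ]
  · ring
  · refine Finset.disjoint_left.2 fun w hw hw' => ?_
    obtain ⟨i, hi, rfl⟩ := Finset.mem_image.1 hw
    exact (mem_residualVerts.1 hw').2.2 i (Finset.mem_filter.1 hi).2 rfl
  · exact Finset.disjoint_left.2 fun w hw hw' => by linarith [hopp w hw, hneg w hw']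
  · refine Finset.disjoint_left.2 fun w hw hw' => ?_
    obtain ⟨i, -, rfl⟩ := Finset.mem_image.1 hw
    have h1 := F.level_basis i
    rcases Finset.mem_union.1 hw' with h | h
    · linarith [hopp _ h]
    · linarith [hneg _ h]

open Classical in
lemma isHexIndex_and_card_residualVerts (hC : C.IsAlmostMaximal) (hF : F.IsSpecial K)
    (heven : Even (Fintype.card ι)) (hpq : p ≠ q) (hp : ¬ F.IsHexIndex K p)
    (hq : ¬ F.IsHexIndex K q) (hR : (F.residualVerts K).card ≤ 2) :
    (∀ i, i ≠ p → i ≠ q → F.IsHexIndex K i) ∧ (F.residualVerts K).card = 1 := by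
  have hsub : Finset.univ.filter (F.IsHexIndex K) ⊆ ({p, q} : Finset ι)ᶜ := fun i hi => by
    have hi' := (Finset.mem_filter.1 hi).2
    simp only [Finset.mem_compl, Finset.mem_insert, Finset.mem_singleton, not_or]
    exact ⟨fun h => hp (h ▸ hi'), fun h => hq (h ▸ hi')⟩
  have hcompl : ({p, q} : Finset ι)ᶜ.card + 2 = Fintype.card ι := by
    rw [← Finset.card_pair hpq, Finset.card_compl_add_card]
  have hcard := hF.card_verts
  obtain ⟨r, hr⟩ := hF.even_card_isHexIndex
  obtain ⟨s, hs⟩ := heven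
  have hC' : C.verts.card + 1 = 3 * Fintype.card ι := hC
  have heq := Finset.eq_of_subset_of_card_le hsub (by omega)
  refine ⟨fun i hip hiq => ?_, by rw [heq] at hcard; omega⟩
  have hi : i ∈ Finset.univ.filter (F.IsHexIndex K) := heq ▸ by simp [hip, hiq]
  exact (Finset.mem_filter.1 hi).2

lemma exists_isHexSplit (hC : C.IsAlmostMaximal) (hF : F.IsSpecial K)
    (heven : Even (Fintype.card ι)) (hpq : p ≠ q) (hp : ¬ F.IsHexIndex K p)
    (hq : ¬ F.IsHexIndex K q) (hR : (F.residualVerts K).card ≤ 2) :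
    ∃ v, F.residualVerts K = {v} ∧ F.IsHexSplit p q v := by
  classical
  obtain ⟨hhex, hcard⟩ := hF.isHexIndex_and_card_residualVerts hC heven hpq hp hq hR
  obtain ⟨v, hv⟩ := Finset.card_eq_one.1 hcard
  have hvC : v ∈ C.verts := by
    have h : v ∈ F.residualVerts K := by simp [hv]
    exact (mem_residualVerts.1 h).1
  refine ⟨v, hv, hpq, fun i hip hiq => ?_, fun i hip hiq => ?_, fun w => ⟨fun hw => ?_, ?_⟩⟩
  · obtain ⟨a, ha⟩ := hhex i hip hiq
    exact ⟨a, ha.ne, fun h => hp (h ▸ ⟨i, ha.symm hF⟩), fun h => hq (h ▸ ⟨i, ha.symm hF⟩),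
      ha.opp_eq, (ha.symm hF).opp_eq⟩
  · exact hF.step_eq_one (hhex i hip hiq).choose_spec.left
  · rw [hF.verts_eq_union, hv] at hw
    simp only [Finset.mem_union, Finset.mem_image, Finset.mem_univ, true_and, Finset.mem_filter,
      Finset.mem_singleton] at hw
    rcases hw with ⟨i, rfl⟩ | ⟨i, rfl⟩ | ⟨i, hi, rfl⟩ | rfl
    · by_cases hip : i = p
      · simp [hip]
      by_cases hiq : i = q
      · simp [hiq]
      exact .inr ⟨i, hip, hiq, .inl rfl⟩
    · by_cases hip : i = p
      · simp [hip]
      by_cases hiq : i = q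
      · simp [hiq]
      exact .inr ⟨i, hip, hiq, .inr (.inr rfl)⟩
    · exact .inr ⟨i, fun h => hp (h ▸ hi), fun h => hq (h ▸ hi), .inr (.inl rfl)⟩
    · simp
  · rintro ((rfl | rfl | rfl | rfl | rfl) | ⟨i, hip, hiq, rfl | rfl | rfl⟩)
    exacts [F.basis_mem p, F.basis_mem q, F.opp_mem p, F.opp_mem q, hvC, F.basis_mem i,
      hF.neg_basis_mem (hhex i hip hiq), F.opp_mem i]

end IsSpecial

end Facet

end Counting

section Support

namespace Facet

lemma eq_smul_of_coord_eq_zero (F : C.Facet) {p : ι} {w : E}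
    (h : ∀ i ≠ p, F.coord i w = 0) : w = F.level w • F.basis p := by
  have hlevel : F.level w = F.coord p w := by
    rw [level_eq_sum, Fintype.sum_eq_single p h]
  refine F.ext_coord fun i => ?_
  rw [map_smul, smul_eq_mul]
  rcases eq_or_ne i p with rfl | hi
  · rw [hlevel, coord_self, mul_one]
  · rw [h i hi, F.coord_basis_of_ne hi.symm, mul_zero]

lemma level_eq_add_of_coord_eq_zero (F : C.Facet) {p q : ι} (hpq : p ≠ q) {w : E}
    (h : ∀ i, i ≠ p → i ≠ q → F.coord i w = 0) : F.level w = F.coord p w + F.coord q w := by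
  rw [level_eq_sum, Fintype.sum_eq_add p q hpq fun i hi => h i hi.1 hi.2]

lemma eq_smul_add_smul_of_coord_eq_zero (F : C.Facet) {p q : ι} (hpq : p ≠ q) {w : E}
    (h : ∀ i, i ≠ p → i ≠ q → F.coord i w = 0) :
    w = F.coord p w • F.basis p + F.coord q w • F.basis q := by
  refine F.ext_coord fun i => ?_
  rw [map_add, map_smul, map_smul, smul_eq_mul, smul_eq_mul]
  rcases eq_or_ne i p with rfl | hip
  · rw [coord_self, F.coord_basis_of_ne hpq.symm, mul_one, mul_zero, add_zero]
  rcases eq_or_ne i q with rfl | hiq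
  · rw [coord_self, F.coord_basis_of_ne hpq, mul_one, mul_zero, zero_add]
  · rw [h i hip hiq, F.coord_basis_of_ne hip.symm, F.coord_basis_of_ne hiq.symm, mul_zero,
      mul_zero, add_zero]

lemma level_eq_add_add_sum (F : C.Facet) [DecidableEq ι] {p q : ι} (hpq : p ≠ q) (w : E) :
    F.level w = F.coord p w + F.coord q w + ∑ i ∈ ({p, q} : Finset ι)ᶜ, F.coord i w := by
  rw [level_eq_sum, ← Finset.sum_add_sum_compl {p, q}, Finset.sum_pair hpq]

lemma coord_add_coord_le_level (F : C.Facet) {p q : ι} (hpq : p ≠ q) {w : E}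
    (h : ∀ i, i ≠ p → i ≠ q → 0 ≤ F.coord i w) : F.coord p w + F.coord q w ≤ F.level w := by
  classical
  rw [F.level_eq_add_add_sum hpq]
  exact le_add_of_nonneg_right (Finset.sum_nonneg fun i hi => h i (by simp_all) (by simp_all))

lemma coord_eq_zero_of_level_le (F : C.Facet) {p q : ι} (hpq : p ≠ q) {w : E}
    (h : ∀ i, i ≠ p → i ≠ q → 0 ≤ F.coord i w)
    (hle : F.level w ≤ F.coord p w + F.coord q w) {i : ι} (hip : i ≠ p) (hiq : i ≠ q) :
    F.coord i w = 0 := by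
  classical
  rw [F.level_eq_add_add_sum hpq] at hle
  have hnonneg : ∀ i ∈ ({p, q} : Finset ι)ᶜ, 0 ≤ F.coord i w := fun i hi =>
    h i (by simp_all) (by simp_all)
  exact (Finset.sum_eq_zero_iff_of_nonneg hnonneg).1
    ((by linarith : _ ≤ (0 : ℝ)).antisymm (Finset.sum_nonneg hnonneg)) i (by simp [hip, hiq])

lemma card_zeroVerts_flip_lt (F : C.Facet) {i : ι} (h : F.step i ≠ 1) :
    (F.flip i).zeroVerts.card < Fintype.card ι :=
  (F.flip i).card_zeroVerts_le.lt_of_ne fun hfull => h (IsFull.step_eq_one hfull)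

lemma IsSpecial.coord_eq_zero_of_mem_residualVerts {K : C.SpecialDirection} {F : C.Facet}
    (hF : F.IsSpecial K) {i : ι} (hi : F.IsHexIndex K i) {w : E} (hw : w ∈ F.residualVerts K)
    (h1 : F.level w = -1) : F.coord i w = 0 := by
  by_contra h
  obtain ⟨hwC, -, hw⟩ := mem_residualVerts.1 hw
  exact hw i hi (hi.elim fun _ ha => ha.eq_neg_of_coord_ne_zero hF hwC h1 h)

end Facet

end Support

section OneSupportIndex

namespace Facet.IsSpecial

variable {K : C.SpecialDirection} {F : C.Facet} {p q : ι}

lemma opp_eq_sub_of_not_isHexIndex (hF : F.IsSpecial K) (hdir : ∀ i ≠ p, F.coord i K.dir = 0)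
    {i : ι} (hi : i ≠ p) (hn : ¬ F.IsHexIndex K i) : F.opp i = F.basis p - F.basis i := by
  have h1 := hF.isFull.level_opp i
  rw [level_eq_add_of_coord_eq_zero F hi fun a hai hap =>
    hF.coord_opp_eq_zero_of_not_isHexIndex (hdir i hi) hn (hdir a hap) hai,
    hF.coord_opp_self (hdir i hi)] at h1
  exact (hF.isFull.opp_eq_sub_of_one_le_coord hi.symm (by linarith)).1

lemma exists_opp_eq_sub (hF : F.IsSpecial K) (hdir : ∀ i ≠ p, F.coord i K.dir = 0)
    (hp : F.coord p K.dir ≠ 0) : ∃ q ≠ p, ¬ F.IsHexIndex K q ∧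
      F.opp p = F.basis q - F.basis p ∧ F.opp q = F.basis p - F.basis q := by
  obtain ⟨q, hqp, hq⟩ : ∃ q ≠ p, F.coord q (F.opp p) ≠ 0 := by
    by_contra! h
    have hlevel := hF.isFull.level_opp p
    rw [level_eq_sum, Fintype.sum_eq_single p h] at hlevel
    exact (F.coord_opp_neg p).ne hlevel
  have hn : ¬ F.IsHexIndex K q := fun ⟨a, ha⟩ =>
    hp (ha.eq_of_coord_opp_ne_zero hF hqp.symm hq ▸ ha.right)
  exact ⟨q, hqp, hn, (hF.opp_eq_sub (hdir q hqp) hqp hq).1,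
    hF.opp_eq_sub_of_not_isHexIndex hdir hqp hn⟩

lemma eq_neg_of_mem_residualVerts (hF : F.IsSpecial K) (hge : ∀ w ∈ C.verts, -1 ≤ F.level w)
    (hdir : ∀ i ≠ p, F.coord i K.dir = 0) (hxp : F.opp p = F.basis q - F.basis p)
    (hxq : F.opp q = F.basis p - F.basis q) {w : E} (hw : w ∈ F.residualVerts K) :
    w = -F.basis p ∨ w = -F.basis q := by
  obtain ⟨hwC, hle, -⟩ := mem_residualVerts.1 hw
  have h1 : F.level w = -1 := hle.antisymm (hge w hwC)
  by_cases h : ∀ i ≠ p, F.coord i w = 0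
  · left
    rw [F.eq_smul_of_coord_eq_zero h, h1, neg_one_smul]
  · push Not at h
    obtain ⟨i, hip, hi⟩ := h
    have hn : ¬ F.IsHexIndex K i := fun hx =>
      hi (hF.coord_eq_zero_of_mem_residualVerts hx hw h1)
    obtain ⟨l, hl, hwl, hopp, -⟩ :=
      hF.exists_eq_opp_sub_of_not_isHexIndex (hdir i hip) hn hwC h1 hi
    obtain rfl : l = p := by
      by_contra hlp
      exact hl (hdir l hlp)
    obtain rfl : q = i := F.basis.injective (sub_left_injective (hxp ▸ hopp))
    right
    rw [hwl, hxq]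
    abel

lemma exists_isHexSplit_of_support_eq_singleton (hC : C.IsAlmostMaximal)
    (heven : Even (Fintype.card ι)) (hF : F.IsSpecial K)
    (hge : ∀ w ∈ C.verts, -1 ≤ F.level w) (hdir : ∀ i ≠ p, F.coord i K.dir = 0)
    (hp : F.coord p K.dir ≠ 0) : ∃ q, F.IsHexSplit p q (-F.basis q) ∧ F.step q = 1 ∧
      F.opp p = F.basis q - F.basis p ∧ F.opp q = F.basis p - F.basis q := by
  classical
  obtain ⟨q, hqp, hq, hxp, hxq⟩ := hF.exists_opp_eq_sub hdir hp
  have hR := fun w => hF.eq_neg_of_mem_residualVerts hge hdir hxp hxq (w := w)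
  have hsub : F.residualVerts K ⊆ {-F.basis p, -F.basis q} := fun w hw => by simpa using hR w hw
  obtain ⟨v, hv, hsplit⟩ := hF.exists_isHexSplit hC heven hqp.symm (fun ⟨a, ha⟩ => hp ha.left) hq
    ((Finset.card_le_card hsub).trans Finset.card_le_two)
  have hmem : -F.basis q ∈ C.verts := by
    have h := hF.opp_sub_mem (hdir q hqp) hqp.symm hxp
    rwa [hxq, sub_sub_cancel_left] at h
  have hres : -F.basis q ∈ F.residualVerts K :=
    mem_residualVerts.2 ⟨hmem, by simp, fun i hi h =>
      hq (F.basis.injective (neg_injective h) ▸ hi)⟩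
  rw [hv, Finset.mem_singleton] at hres
  exact ⟨q, hres ▸ hsplit, hF.step_eq_one (hdir q hqp), hxp, hxq⟩

end Facet.IsSpecial

end OneSupportIndex

/-! ### Nonzero vertex sum -/

section VertexSum

/-- The vertex sum as a special direction; if it does not vanish, it has level `1` on the facets
whose cone contains it. -/
def vertexSumDirection (hC : C.IsAlmostMaximal) : C.SpecialDirection where
  dir := C.vertexSum
  height := 1
  deep := ∅
  level_dir_le F := F.level_vertexSum_le_one hC
  isFull F h := F.isFull_of_level_vertexSum_eq_one hC h
  mem_deep_iff F h w hw := by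
    simpa using F.neg_one_le_level_of_level_vertexSum_eq_one hC h hw

lemma vertexSum_mem_lattice : C.vertexSum ∈ C.lattice :=
  sum_mem fun _ hw => C.verts_subset hw

namespace Facet

lemma step_mul_coord_vertexSum (hC : C.IsAlmostMaximal) (F : C.Facet)
    (h1 : F.level C.vertexSum = 1) {p : ι} (h0 : 0 < F.coord p C.vertexSum)
    (hlt : F.coord p C.vertexSum < 1) :
    F.step p * F.coord p C.vertexSum = F.step p - 1 := by
  obtain ⟨e, he⟩ := F.exists_int_step_mul_coord p C.vertexSum_mem_lattice
  have hk := F.one_le_step p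
  have he0 : 0 < (e : ℝ) := he ▸ mul_pos (by linarith) h0
  have hek : (e : ℝ) < F.step p := he ▸ mul_lt_of_lt_one_right (by linarith) hlt
  have hk1 : F.step p ≠ 1 := by
    norm_cast at he0 hek
    omega
  have hZ : ((F.flip p).zeroVerts.card : ℝ) + 1 ≤ Fintype.card ι := by
    exact_mod_cast F.card_zeroVerts_flip_lt hk1
  have hs : (F.flip p).level C.vertexSum = 1 - e := by rw [level_flip, h1, he]
  have hb := (F.flip p).le_deficit (F.basis p)
  rw [level_flip, level_basis, coord_self, mul_one] at hb
  have hbe := (F.flip p).deficit_le hC (F.basis_mem p)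
  have hle : (F.step p : ℝ) ≤ e + 1 := by linarith
  refine he.trans ?_
  norm_cast at hle hek ⊢
  omega

lemma step_eq_two_of_two_support (hC : C.IsAlmostMaximal) (F : C.Facet)
    (h1 : F.level C.vertexSum = 1) (hnonneg : ∀ i, 0 ≤ F.coord i C.vertexSum) {p q : ι}
    (hpq : p ≠ q) (hp : F.coord p C.vertexSum ≠ 0) (hq : F.coord q C.vertexSum ≠ 0) :
    (∀ i, i ≠ p → i ≠ q → F.coord i C.vertexSum = 0) ∧
      ∀ i, F.coord i C.vertexSum ≠ 0 → F.step i = 2 := by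
  have hpair := F.coord_add_coord_le_level hpq fun i _ _ => hnonneg i
  rw [h1] at hpair
  have hp0 := (hnonneg p).lt_of_ne' hp
  have hq0 := (hnonneg q).lt_of_ne' hq
  have half {i : ι} (h0 : 0 < F.coord i C.vertexSum) (hlt : F.coord i C.vertexSum < 1) :
      1 / 2 ≤ F.coord i C.vertexSum ∧ (F.coord i C.vertexSum = 1 / 2 → F.step i = 2) := by
    have he := F.step_mul_coord_vertexSum hC h1 h0 hlt
    have hk1 : (1 : ℝ) < F.step i := by
      linarith [mul_pos (zero_lt_one.trans_le (F.one_le_step i)) h0]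
    have hk : (2 : ℝ) ≤ F.step i := by exact_mod_cast hk1
    refine ⟨by nlinarith, fun h => ?_⟩
    rw [h] at he
    exact_mod_cast show (F.step i : ℝ) = 2 by linarith
  have hpge := (half hp0 (by linarith)).1
  have hqge := (half hq0 (by linarith)).1
  have hzero : ∀ i, i ≠ p → i ≠ q → F.coord i C.vertexSum = 0 := fun i hip hiq =>
    F.coord_eq_zero_of_level_le hpq (fun i _ _ => hnonneg i) (by linarith) hip hiq
  refine ⟨hzero, fun i hi => ?_⟩
  have hi' : F.coord i C.vertexSum = 1 / 2 := by
    by_cases hip : i = p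
    · rw [hip]
      linarith
    by_cases hiq : i = q
    · rw [hiq]
      linarith
    exact (hi (hzero i hip hiq)).elim
  exact (half (by linarith) (by linarith)).2 hi'

end Facet

end VertexSum

section TwoSupportIndices

lemma Facet.IsFull.neg_half_le_coord {F : C.Facet} (hF : F.IsFull) {i : ι} (hstep : F.step i = 2)
    {w : E} (hw : w ∈ C.verts) (h1 : F.level w = -1) : -(1 / 2) ≤ F.coord i w := by
  obtain ⟨n, hn⟩ := F.exists_int_step_mul_coord i (C.verts_subset hw)
  have hne : w ≠ F.opp i := fun h => by linarith [hF.level_opp i, congrArg F.level h]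
  have hlt := F.level_flip_lt_of_ne (i := i) hw hne (by linarith)
  rw [hstep, Int.cast_ofNat] at hn hlt
  have hn1 : -1 ≤ n := by
    have h : -2 < (n : ℝ) := by linarith
    norm_cast at h
  have hn1' : (-1 : ℝ) ≤ n := by exact_mod_cast hn1
  linarith

namespace Facet.IsSpecial

variable {K : C.SpecialDirection} {F : C.Facet} {p q : ι}

lemma opp_eq_half_smul_sub (hF : F.IsSpecial K)
    (hdir : ∀ i, i ≠ p → i ≠ q → F.coord i K.dir = 0) (hpq : p ≠ q) (hp : F.step p = 2) :
    F.opp p = (1 / 2 : ℝ) • (F.basis q - F.basis p) := by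
  have hzero : ∀ i, i ≠ p → i ≠ q → F.coord i (F.opp p) = 0 := by
    intro i hip hiq
    by_contra h
    have h1 := (hF.opp_eq_sub (hdir i hip hiq) hip h).2
    omega
  have hcp := hF.isFull.step_mul_coord_opp p
  have hsum := F.level_eq_add_of_coord_eq_zero hpq hzero
  rw [hF.isFull.level_opp] at hsum
  have hp' : (F.step p : ℝ) = 2 := by exact_mod_cast hp
  rw [hp'] at hcp
  rw [F.eq_smul_add_smul_of_coord_eq_zero hpq hzero,
    show F.coord p (F.opp p) = -(1 / 2) by linarith,
    show F.coord q (F.opp p) = 1 / 2 by linarith]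
  module

lemma eq_neg_half_smul_add (hF : F.IsSpecial K)
    (hdir : ∀ i, i ≠ p → i ≠ q → F.coord i K.dir = 0) (hpq : p ≠ q)
    (hsupp : ∀ i, F.coord i K.dir ≠ 0 → F.step i = 2)
    (hp : F.coord p K.dir ≠ 0) (hq : F.coord q K.dir ≠ 0) {w : E}
    (hw : w ∈ F.residualVerts K) (h1 : F.level w = -1) :
    w = -(1 / 2 : ℝ) • (F.basis p + F.basis q) := by
  have hwC := (mem_residualVerts.1 hw).1
  have hzero : ∀ i, i ≠ p → i ≠ q → F.coord i w = 0 := by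
    intro i hip hiq
    by_contra h
    have hn : ¬ F.IsHexIndex K i := fun hx =>
      h (hF.coord_eq_zero_of_mem_residualVerts hx hw h1)
    obtain ⟨l, hl, -, -, hstep⟩ :=
      hF.exists_eq_opp_sub_of_not_isHexIndex (hdir i hip hiq) hn hwC h1 h
    have := hsupp l hl
    omega
  have hge {i : ι} (hi : F.coord i K.dir ≠ 0) : -(1 / 2) ≤ F.coord i w :=
    hF.isFull.neg_half_le_coord (hsupp i hi) hwC h1
  have hsum := F.level_eq_add_of_coord_eq_zero hpq hzero
  rw [F.eq_smul_add_smul_of_coord_eq_zero hpq hzero,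
    show F.coord p w = -(1 / 2) by linarith [hge hp, hge hq],
    show F.coord q w = -(1 / 2) by linarith [hge hp, hge hq]]
  module

lemma isHexSplit_of_two_support (hC : C.IsAlmostMaximal) (heven : Even (Fintype.card ι))
    (hF : F.IsSpecial K) (hge : ∀ w ∈ C.verts, -1 ≤ F.level w)
    (hdir : ∀ i, i ≠ p → i ≠ q → F.coord i K.dir = 0) (hpq : p ≠ q)
    (hsupp : ∀ i, F.coord i K.dir ≠ 0 → F.step i = 2)
    (hp : F.coord p K.dir ≠ 0) (hq : F.coord q K.dir ≠ 0) :
    F.IsHexSplit p q (-(1 / 2 : ℝ) • (F.basis p + F.basis q)) := by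
  have hR : ∀ w ∈ F.residualVerts K, w = -(1 / 2 : ℝ) • (F.basis p + F.basis q) := fun w hw =>
    hF.eq_neg_half_smul_add hdir hpq hsupp hp hq hw
      ((mem_residualVerts.1 hw).2.1.antisymm (hge w (mem_residualVerts.1 hw).1))
  obtain ⟨v, hv, hsplit⟩ := hF.exists_isHexSplit hC heven hpq (fun ⟨_, ha⟩ => hp ha.left)
    (fun ⟨_, ha⟩ => hq ha.left)
    ((Finset.card_le_one.2 fun w hw w' hw' => (hR w hw).trans (hR w' hw').symm).trans one_le_two)
  exact hR v (by simp [hv]) ▸ hsplit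

end Facet.IsSpecial

end TwoSupportIndices

section Pentagons

/-- The configuration consists of hexagons and of a pentagon with vertex set `Q`, the pentagon
lying in the plane of `F.basis p` and `F.basis q` and being written in the lattice basis `x`, `y`
of this plane. -/
structure IsHexPentagonSplit (C : VertexConfig ι E) (Q : Set (Fin 2 → ℤ)) (F : C.Facet)
    (p q : ι) (v x y : E) : Prop extends F.IsHexSplit p q v where
  left_mem : x ∈ C.lattice
  right_mem : y ∈ C.lattice
  exists_planePoint : ∀ w ∈ C.lattice, ∃ t,
    F.coord p w • F.basis p + F.coord q w • F.basis q = planePoint x y t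
  image_planePoint : planePoint x y '' Q = {F.basis p, F.basis q, F.opp p, F.opp q, v}

/-- The configuration splits into hexagons and one pentagon with vertex set `Q`. -/
def SplitsOffPentagon (C : VertexConfig ι E) (Q : Set (Fin 2 → ℤ)) : Prop :=
  ∃ (F : C.Facet) (p q : ι) (v x y : E), C.IsHexPentagonSplit Q F p q v x y

lemma Facet.basis_mem_lattice (F : C.Facet) (i : ι) : F.basis i ∈ C.lattice :=
  C.verts_subset (F.basis_mem i)

lemma Facet.exists_int_coord_of_step_eq_one (F : C.Facet) {i : ι} (h : F.step i = 1) {w : E}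
    (hw : w ∈ C.lattice) : ∃ n : ℤ, F.coord i w = n := by
  simpa [h] using F.exists_int_step_mul_coord i hw

namespace Facet.IsHexSplit

variable {F : C.Facet} {p q : ι} {v w : E}

lemma exists_int_coord (h : F.IsHexSplit p q v) (hw : w ∈ C.lattice) :
    ∃ n : ι → ℤ, ∀ i, i ≠ p → i ≠ q → F.coord i w = n i := by
  rw [← Classical.skolem (p := fun i (n : ℤ) => i ≠ p → i ≠ q → F.coord i w = n)]
  intro i
  by_cases hi : i ≠ p ∧ i ≠ q
  · obtain ⟨n, hn⟩ := F.exists_int_coord_of_step_eq_one (h.step_eq_one i hi.1 hi.2) hw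
    exact ⟨n, fun _ _ => hn⟩
  · exact ⟨0, fun hp hq => (hi ⟨hp, hq⟩).elim⟩

lemma exists_int_coord_add_coord (h : F.IsHexSplit p q v) (hw : w ∈ C.lattice) :
    ∃ n : ℤ, F.coord p w + F.coord q w = n := by
  classical
  obtain ⟨n, hn⟩ := h.exists_int_coord hw
  obtain ⟨m, hm⟩ := F.exists_int_level hw
  rw [F.level_eq_add_add_sum h.ne,
    Finset.sum_congr rfl fun i hi => hn i (by simp_all) (by simp_all)] at hm
  exact ⟨m - ∑ i ∈ ({p, q} : Finset ι)ᶜ, n i, by push_cast; linarith⟩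

lemma splitsOffPentagon_tV2v (h : F.IsHexSplit p q (-F.basis q)) (hq : F.step q = 1)
    (hxp : F.opp p = F.basis q - F.basis p) (hxq : F.opp q = F.basis p - F.basis q) :
    C.SplitsOffPentagon tV2v := by
  refine ⟨F, p, q, _, F.basis q, F.basis p - F.basis q, h, F.basis_mem_lattice q,
    sub_mem (F.basis_mem_lattice p) (F.basis_mem_lattice q), fun w hw => ?_, ?_⟩
  · obtain ⟨n, hn⟩ := h.exists_int_coord_add_coord hw
    obtain ⟨m, hm⟩ := F.exists_int_coord_of_step_eq_one hq hw
    refine ⟨![n, n - m], ?_⟩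
    simp only [planePoint, Matrix.cons_val_zero, Matrix.cons_val_one, Int.cast_sub, ← hn, ← hm]
    module
  · simp only [tV2v, planePoint, Set.image_insert_eq, Set.image_singleton, Matrix.cons_val_zero,
      Matrix.cons_val_one, hxp, hxq]
    simp only [Int.cast_neg, Int.cast_one, Int.cast_zero, one_smul, zero_smul, neg_smul, add_zero,
      zero_add, add_sub_cancel, neg_sub]
    grind

lemma splitsOffPentagon_E1v (h : F.IsHexSplit p q (-(1 / 2 : ℝ) • (F.basis p + F.basis q)))
    (hp : F.step p = 2) (hxp : F.opp p = (1 / 2 : ℝ) • (F.basis q - F.basis p))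
    (hxq : F.opp q = (1 / 2 : ℝ) • (F.basis p - F.basis q)) : C.SplitsOffPentagon E1v := by
  have hv : -(1 / 2 : ℝ) • (F.basis p + F.basis q) ∈ C.lattice :=
    C.verts_subset ((h.mem_verts_iff _).2 (.inl (by simp)))
  refine ⟨F, p, q, _, F.basis p, (1 / 2 : ℝ) • (F.basis p + F.basis q), h,
    F.basis_mem_lattice p, by simpa only [neg_smul, neg_neg] using neg_mem hv, fun w hw => ?_, ?_⟩
  · obtain ⟨n, hn⟩ := h.exists_int_coord_add_coord hw
    obtain ⟨m, hm⟩ := F.exists_int_step_mul_coord p hw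
    refine ⟨![m - n, 2 * n - m], ?_⟩
    rw [hp] at hm
    simp only [planePoint, Matrix.cons_val_zero, Matrix.cons_val_one, Int.cast_sub, Int.cast_mul,
      Int.cast_ofNat, ← hn, ← hm]
    module
  · have hq : (-1 : ℝ) • F.basis p + (2 : ℝ) • (1 / 2 : ℝ) • (F.basis p + F.basis q) =
        F.basis q := by module
    have hxp' : (-1 : ℝ) • F.basis p + (1 : ℝ) • (1 / 2 : ℝ) • (F.basis p + F.basis q) =
        F.opp p := by rw [hxp]; module
    have hxq' : (1 : ℝ) • F.basis p + (-1 : ℝ) • (1 / 2 : ℝ) • (F.basis p + F.basis q) =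
        F.opp q := by rw [hxq]; module
    simp only [E1v, planePoint, Set.image_insert_eq, Set.image_singleton, Matrix.cons_val_zero,
      Matrix.cons_val_one, Int.cast_neg, Int.cast_one, Int.cast_zero, Int.cast_ofNat, hq, hxp',
      hxq']
    simp only [one_smul, zero_smul, add_zero, zero_add, neg_smul]
    grind

lemma splitsOffPentagon_E2v (h : F.IsHexSplit p q (-F.basis p - F.basis q)) (hq : F.step q = 1)
    (hxp : F.opp p = F.basis q - F.basis p) (hxq : F.opp q = F.basis p - F.basis q) :
    C.SplitsOffPentagon E2v := by
  refine ⟨F, p, q, _, F.basis p, F.basis q, h, F.basis_mem_lattice p, F.basis_mem_lattice q,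
    fun w hw => ?_, ?_⟩
  · obtain ⟨n, hn⟩ := h.exists_int_coord_add_coord hw
    obtain ⟨m, hm⟩ := F.exists_int_coord_of_step_eq_one hq hw
    refine ⟨![n - m, m], ?_⟩
    simp only [planePoint, Matrix.cons_val_zero, Matrix.cons_val_one, Int.cast_sub, ← hn, ← hm,
      add_sub_cancel_right]
  · simp only [E2v, planePoint, Set.image_insert_eq, Set.image_singleton, Matrix.cons_val_zero,
      Matrix.cons_val_one, hxp, hxq]
    simp only [Int.cast_neg, Int.cast_one, Int.cast_zero, one_smul, zero_smul, neg_smul, add_zero,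
      zero_add, neg_add_eq_sub, ← sub_eq_add_neg]
    grind

end Facet.IsHexSplit

theorem splitsOffPentagon_of_vertexSum_ne_zero (hC : C.IsAlmostMaximal)
    (heven : Even (Fintype.card ι)) (hs : C.vertexSum ≠ 0) :
    C.SplitsOffPentagon tV2v ∨ C.SplitsOffPentagon E1v := by
  classical
  obtain ⟨F, hnonneg⟩ := Facet.exists_forall_coord_nonneg C C.vertexSum
  obtain ⟨p, hp⟩ : ∃ p, F.coord p C.vertexSum ≠ 0 := by
    by_contra! h
    exact hs (F.ext_coord fun i => by rw [h i, map_zero])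
  have h1 := F.level_eq_one_of_coord_nonneg C.vertexSum_mem_lattice hs hnonneg
    (F.level_vertexSum_le_one hC)
  have hF : F.IsSpecial (vertexSumDirection hC) := h1
  have hge : ∀ w ∈ C.verts, -1 ≤ F.level w := fun w hw =>
    F.neg_one_le_level_of_level_vertexSum_eq_one hC h1 hw
  by_cases hsing : ∀ i ≠ p, F.coord i C.vertexSum = 0
  · obtain ⟨q, hsplit, hq, hxp, hxq⟩ :=
      hF.exists_isHexSplit_of_support_eq_singleton hC heven hge hsing hp
    exact .inl (hsplit.splitsOffPentagon_tV2v hq hxp hxq)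
  right
  push Not at hsing
  obtain ⟨q, hqp, hq⟩ := hsing
  obtain ⟨hdir, hsupp⟩ := F.step_eq_two_of_two_support hC h1 hnonneg hqp.symm hp hq
  have hdir' : ∀ i, i ≠ q → i ≠ p → F.coord i C.vertexSum = 0 := fun i hiq hip => hdir i hip hiq
  exact (hF.isHexSplit_of_two_support hC heven hge hdir hqp.symm hsupp hp hq).splitsOffPentagon_E1v
    (hsupp p hp) (hF.opp_eq_half_smul_sub hdir hqp.symm (hsupp p hp))
    (hF.opp_eq_half_smul_sub hdir' hqp (hsupp q hq))

end Pentagons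

/-! ### Vanishing vertex sum -/

section CentrallySymmetric

lemma Facet.level_basis_eq_neg_one (hge : ∀ F : C.Facet, ∀ w ∈ C.verts, -1 ≤ F.level w)
    {F G : C.Facet} {w : E} (hF : ∀ i, 0 ≤ F.coord i (-w)) (hF1 : F.level (-w) = 1)
    (hG : G.level w = 1) {i : ι} (hi : F.coord i (-w) ≠ 0) : G.level (F.basis i) = -1 := by
  have hsum : ∑ j, F.coord j (-w) * (1 + G.level (F.basis j)) = 0 := by
    have h : G.level (-w) = ∑ j, F.coord j (-w) * G.level (F.basis j) := by
      conv_lhs => rw [← F.basis.sum_repr (-w), map_sum]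
      simp only [map_smul, smul_eq_mul, coord, Module.Basis.coord_apply]
    simp only [mul_add, mul_one, Finset.sum_add_distrib]
    rw [← h, ← F.level_eq_sum, hF1, map_neg, hG, add_neg_cancel]
  have hterm := (Finset.sum_eq_zero_iff_of_nonneg fun j _ => mul_nonneg (hF j)
    (by linarith [hge G _ (F.basis_mem j)])).1 hsum i (Finset.mem_univ i)
  linarith [(mul_eq_zero.1 hterm).resolve_left hi]

lemma neg_mem_of_neg_one_le_level (hge : ∀ F : C.Facet, ∀ w ∈ C.verts, -1 ≤ F.level w) {w : E}
    (hw : w ∈ C.verts) : -w ∈ C.verts := by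
  have hw0 : w ≠ 0 := fun h => C.zero_notMem (h ▸ hw)
  have hwL : w ∈ C.lattice := C.verts_subset hw
  obtain ⟨F, hF⟩ := Facet.exists_forall_coord_nonneg C (-w)
  have hF1 := F.level_eq_one_of_coord_nonneg (neg_mem hwL) (neg_ne_zero.2 hw0) hF
    (by rw [map_neg]; linarith [hge F w hw])
  obtain ⟨i, hi⟩ : ∃ i, F.coord i (-w) ≠ 0 := by
    by_contra! h
    exact hw0 (neg_eq_zero.1 (F.ext_coord fun i => by rw [h i, map_zero]))
  obtain ⟨G, hG⟩ := Facet.exists_forall_coord_nonneg C w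
  obtain ⟨j, rfl⟩ := G.exists_eq_basis hw
    (G.level_eq_one_of_coord_nonneg hwL hw0 hG (G.level_le hw))
  have hlevel := Facet.level_basis_eq_neg_one hge hF hF1 (G.level_basis j) hi
  have hcoord : ∀ l ≠ j, G.coord l (F.basis i) = 0 := by
    intro l hl
    have hflip := Facet.level_basis_eq_neg_one hge hF hF1 (G := G.flip l)
      (by rw [← G.flip_basis_of_ne hl.symm, Facet.level_basis]) hi
    rw [G.level_flip, hlevel] at hflip
    have hk := G.one_le_step l
    exact (mul_eq_zero.1 (by linarith)).resolve_left (by linarith : (G.step l : ℝ) ≠ 0)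
  rw [← neg_one_smul ℝ, ← hlevel, ← G.eq_smul_of_coord_eq_zero hcoord]
  exact F.basis_mem i

lemma exists_level_lt_neg_one (hodd : Odd C.verts.card) :
    ∃ F : C.Facet, ∃ w ∈ C.verts, F.level w < -1 := by
  by_contra! hge
  refine Nat.not_even_iff_odd.2 hodd (even_card_of_involution (f := (-·))
    (fun w hw => neg_mem_of_neg_one_le_level hge hw) (fun w hw h => ?_) fun w _ => neg_neg w)
  have h2 : (2 : ℝ) • w = 0 := by rw [two_smul, ← eq_neg_iff_add_eq_zero, h]
  exact C.zero_notMem ((smul_eq_zero.1 h2).resolve_left two_ne_zero ▸ hw)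

end CentrallySymmetric

section VanishingVertexSum

namespace Facet

lemma level_vertexSum_eq_zero (h0 : C.vertexSum = 0) (F : C.Facet) : F.level C.vertexSum = 0 := by
  rw [h0, map_zero]

lemma neg_one_le_level_flip (hC : C.IsAlmostMaximal) (h0 : C.vertexSum = 0) (F : C.Facet) {a : ι}
    (ha : F.step a ≠ 1) {w : E} (hw : w ∈ C.verts) : -1 ≤ (F.flip a).level w := by
  by_contra! h
  exact ha (IsFull.step_eq_one
    ((F.flip a).isFull_of_level_lt hC (level_vertexSum_eq_zero h0 _) hw h))

lemma step_eq_two_of_ne_one (hC : C.IsAlmostMaximal) (h0 : C.vertexSum = 0) (F : C.Facet) {a : ι}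
    (ha : F.step a ≠ 1) : F.step a = 2 := by
  have h := F.neg_one_le_level_flip hC h0 ha (F.basis_mem a)
  rw [level_flip, level_basis, coord_self] at h
  have h1 := F.one_le_step a
  have h2 : (F.step a : ℝ) ≤ 2 := by linarith
  norm_cast at h1 h2
  omega

lemma level_flip_opp (hC : C.IsAlmostMaximal) (h0 : C.vertexSum = 0) (F : C.Facet) {a i : ι}
    (ha : F.step a ≠ 1) (hi : i ≠ a) : (F.flip a).level ((F.flip a).opp i) = 0 ∧
      ∀ j ≠ i, 0 ≤ (F.flip a).coord j ((F.flip a).opp i) :=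
  (F.flip a).level_opp_eq_zero_of_ne
    ((F.flip a).card_le_card_zeroVerts_add_one hC (level_vertexSum_eq_zero h0 _))
    (fun h => ha (step_eq_one_of_level_opp h)) hi

lemma neg_one_le_coord_opp (F : C.Facet) {i : ι} (h : F.level (F.opp i) = 0) :
    -1 ≤ F.coord i (F.opp i) := by
  have h1 := F.step_mul_coord_of_neg (mem_zeroVerts.2 ⟨F.opp_mem i, h⟩) (F.coord_opp_neg i)
  nlinarith [F.one_le_step i, F.coord_opp_neg i]

end Facet

/-- If the vertex sum vanishes, the negative of a vertex `z` is a special direction whose facets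
are those where `z` has level `-2`. -/
def negDirection (hC : C.IsAlmostMaximal) (h0 : C.vertexSum = 0) {z : E} (hz : z ∈ C.verts) :
    C.SpecialDirection where
  dir := -z
  height := 2
  deep := {z}
  level_dir_le F := by
    rw [map_neg]
    linarith [F.neg_two_le_level hC (F.level_vertexSum_eq_zero h0) hz]
  isFull F h := by
    rw [map_neg] at h
    exact F.isFull_of_level_lt hC (F.level_vertexSum_eq_zero h0) hz (by linarith)
  mem_deep_iff F h w hw := by
    rw [map_neg] at h
    refine ⟨?_, fun hlt => ?_⟩
    · rintro rfl
      linarith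
    · by_contra hne
      have := F.neg_one_le_level_of_ne hC (F.level_vertexSum_eq_zero h0) hz hw hne (by linarith)
      linarith

namespace Facet.IsSpecial

variable {hC : C.IsAlmostMaximal} {h0 : C.vertexSum = 0} {z : E} {hz : z ∈ C.verts} {F : C.Facet}
  {a e i : ι} {w : E}

lemma level_deep (hF : F.IsSpecial (negDirection hC h0 hz)) : F.level z = -2 := by
  have h : F.level (-z) = 2 := hF
  rw [map_neg] at h
  linarith

lemma coord_deep_nonpos (hF : F.IsSpecial (negDirection hC h0 hz)) (i : ι) :
    F.coord i z ≤ 0 := by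
  have h : 0 ≤ F.coord i (-z) := hF.coord_dir_nonneg i
  rw [map_neg] at h
  linarith

lemma coord_dir_eq_zero_iff :
    F.coord i (negDirection hC h0 hz).dir = 0 ↔ F.coord i z = 0 := by
  rw [show (negDirection hC h0 hz).dir = -z from rfl, map_neg, neg_eq_zero]

lemma coord_opp_self_of_step_eq_two (hF : F.IsSpecial (negDirection hC h0 hz))
    (ha : F.step a = 2) : F.coord a (F.opp a) = -(1 / 2) := by
  have h := hF.isFull.step_mul_coord_opp a
  rw [ha] at h
  push_cast at h
  linarith

lemma coord_deep_ne_neg_one (hF : F.IsSpecial (negDirection hC h0 hz)) (ha : F.step a = 2) :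
    F.coord a z ≠ -1 := by
  intro hza
  have ha1 : F.step a ≠ 1 := by omega
  have hG0 : (F.flip a).level z = 0 := by
    rw [Facet.level_flip, hF.level_deep, hza, ha]
    norm_num
  have hGa : (F.flip a).coord a z = 2 := by
    rw [coord_flip_self, hF.coord_opp_self_of_step_eq_two ha, hza]
    norm_num
  obtain ⟨i, rfl⟩ := (F.flip a).exists_eq_opp (mem_zeroVerts.2 ⟨hz, hG0⟩)
  have hia : i ≠ a := fun h => ha1 (step_eq_one_of_level_opp (h ▸ hG0))
  obtain ⟨-, hnonneg⟩ := F.level_flip_opp hC h0 ha1 hia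
  have := (F.flip a).neg_one_le_coord_opp hG0
  have := (F.flip a).coord_add_coord_le_level hia fun j hj _ => hnonneg j hj
  linarith

lemma coord_deep_of_step_eq_two (hF : F.IsSpecial (negDirection hC h0 hz)) (ha : F.step a = 2) :
    F.coord a z = -(1 / 2) := by
  have ha1 : F.step a ≠ 1 := by omega
  have hne : F.coord a z ≠ 0 := fun h => ha1 (hF.step_eq_one (coord_dir_eq_zero_iff.2 h))
  have hlt := (hF.coord_deep_nonpos a).lt_of_ne hne
  obtain ⟨m, hm⟩ := F.exists_int_step_mul_coord a (C.verts_subset hz)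
  have hflip := F.level_flip_lt_of_ne (i := a) hz
    (fun h => by linarith [h ▸ hF.isFull.level_opp a, hF.level_deep])
    (by linarith [hF.level_deep])
  rw [hF.level_deep] at hflip
  have hm1 := hF.coord_deep_ne_neg_one ha
  rw [ha] at hm hflip
  push_cast at hm hflip
  have hm0 : (m : ℝ) < 0 := by linarith
  have hm3 : (-3 : ℝ) < m := by linarith
  norm_cast at hm0 hm3
  obtain rfl | rfl : m = -1 ∨ m = -2 := by omega
  all_goals push_cast at hm
  · linarith
  · exact absurd (by linarith) hm1

lemma exists_opp_eq_half_smul_sub (hF : F.IsSpecial (negDirection hC h0 hz))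
    (ha : F.step a = 2) : ∃ e ≠ a, F.step e = 2 ∧
      F.opp a = (1 / 2 : ℝ) • (F.basis e - F.basis a) := by
  have hself := hF.coord_opp_self_of_step_eq_two ha
  have hlevel := hF.isFull.level_opp a
  obtain ⟨e, hea, he⟩ : ∃ e ≠ a, F.coord e (F.opp a) ≠ 0 := by
    by_contra! h
    rw [level_eq_sum, Fintype.sum_eq_single a h] at hlevel
    linarith
  have hnonneg : ∀ j, j ≠ e → j ≠ a → 0 ≤ F.coord j (F.opp a) := fun j _ hj =>
    hF.isFull.coord_opp_nonneg hj
  have hpos := (hF.isFull.coord_opp_nonneg hea).lt_of_ne' he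
  have hle := F.coord_add_coord_le_level hea hnonneg
  obtain ⟨n, hn⟩ := F.exists_int_step_mul_coord e (C.verts_subset (F.opp_mem a))
  have hn1 : (1 : ℝ) ≤ n := by
    have : (0 : ℝ) < n := hn ▸ mul_pos (zero_lt_one.trans_le (F.one_le_step e)) hpos
    exact_mod_cast this
  have he2 : F.step e = 2 := F.step_eq_two_of_ne_one hC h0 fun h => by
    rw [h] at hn
    push_cast at hn
    linarith
  have he2' : (F.step e : ℝ) = 2 := by exact_mod_cast he2
  rw [he2'] at hn
  have hzero : ∀ i, i ≠ e → i ≠ a → F.coord i (F.opp a) = 0 := fun _ hi hi' =>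
    F.coord_eq_zero_of_level_le hea hnonneg (by linarith) hi hi'
  refine ⟨e, hea, he2, ?_⟩
  rw [F.eq_smul_add_smul_of_coord_eq_zero hea hzero, hself,
    show F.coord e (F.opp a) = 1 / 2 by linarith]
  module

lemma flip_opp_eq_or (hF : F.IsSpecial (negDirection hC h0 hz)) (ha : F.step a = 2)
    (hia : i ≠ a) : ((F.flip a).opp i = F.opp i ∧ F.coord a (F.opp i) = 0) ∨
      (F.level ((F.flip a).opp i) = -1 ∧ F.coord a ((F.flip a).opp i) = -(1 / 2)) := by
  have ha1 : F.step a ≠ 1 := by omega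
  have ha' : (F.step a : ℝ) = 2 := by exact_mod_cast ha
  obtain ⟨hlevel, hnonneg⟩ := F.level_flip_opp hC h0 ha1 hia
  have hmem := (F.flip a).opp_mem i
  have hneg := (F.flip a).coord_opp_neg i
  have hage := hnonneg a hia.symm
  set n := (F.flip a).opp i
  rw [coord_flip_self, hF.coord_opp_self_of_step_eq_two ha] at hage
  rw [Facet.level_flip, ha'] at hlevel
  have hle : F.level n ≤ 0 := by
    by_contra! h
    linarith [div_neg_of_pos_of_neg (show 0 < F.coord a n by linarith)
      (show (-(1 / 2) : ℝ) < 0 by norm_num)]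
  have hnz : n ≠ z := fun h => by
    have h1 := hF.coord_deep_of_step_eq_two ha
    rw [h, h1, hF.level_deep] at hlevel
    norm_num at hlevel
  have hge := F.neg_one_le_level_of_ne hC (F.level_vertexSum_eq_zero h0) hz hmem hnz
    (by linarith [hF.level_deep])
  obtain ⟨k, hk⟩ := F.exists_int_level (C.verts_subset hmem)
  rw [hk] at hle hge hlevel
  norm_cast at hle hge
  obtain rfl | rfl : k = 0 ∨ k = -1 := by omega
  · have hca : F.coord a n = 0 := by
      push_cast at hlevel
      linarith
    rw [coord_flip_of_ne _ hia, hca, zero_div, mul_zero, sub_zero] at hneg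
    have h := F.eq_opp_of_coord_neg (mem_zeroVerts.2 ⟨hmem, by simpa using hk⟩) hneg
    exact .inl ⟨h, h ▸ hca⟩
  · push_cast at hk hlevel
    exact .inr ⟨hk, by linarith⟩

lemma coord_opp_eq_zero_of_step_eq_two (hF : F.IsSpecial (negDirection hC h0 hz))
    (ha : F.step a = 2) (he : F.step e = 2) (hea : e ≠ a)
    (hx : F.opp a = (1 / 2 : ℝ) • (F.basis e - F.basis a)) (hia : i ≠ a) (hie : i ≠ e) :
    F.coord a (F.opp i) = 0 := by
  obtain ⟨-, h⟩ | ⟨hlevel, hcoord⟩ := hF.flip_opp_eq_or ha hia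
  · exact h
  exfalso
  have hnonneg := (F.level_flip_opp hC h0 (by omega) hia).2 e hie.symm
  rw [coord_flip_of_ne _ hea, hcoord, hF.coord_opp_self_of_step_eq_two ha, hx, map_smul, map_sub,
    coord_self, F.coord_basis_of_ne hea.symm] at hnonneg
  have hflip := F.neg_one_le_level_flip hC h0 (a := e) (by omega) ((F.flip a).opp_mem i)
  rw [Facet.level_flip, hlevel, he] at hflip
  norm_num at hnonneg hflip
  linarith

lemma opp_eq_half_smul_sub_symm (hF : F.IsSpecial (negDirection hC h0 hz)) (he : F.step e = 2)
    (hea : e ≠ a) (hx : F.opp a = (1 / 2 : ℝ) • (F.basis e - F.basis a)) :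
    F.opp e = (1 / 2 : ℝ) • (F.basis a - F.basis e) := by
  obtain ⟨c, hce, hc, hxe⟩ := hF.exists_opp_eq_half_smul_sub he
  rcases eq_or_ne a c with rfl | hac
  · exact hxe
  have h := hF.coord_opp_eq_zero_of_step_eq_two he hc hce hxe hea.symm hac
  rw [hx, map_smul, map_sub, coord_self, F.coord_basis_of_ne hea.symm] at h
  norm_num at h

lemma coord_flip_of_opp_eq_half_smul_sub (hea : e ≠ a)
    (hx : F.opp a = (1 / 2 : ℝ) • (F.basis e - F.basis a)) (w : E) :
    (F.flip a).coord e w = F.coord e w + F.coord a w := by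
  rw [coord_flip_of_ne _ hea, hx]
  simp only [map_smul, map_sub, coord_self, F.coord_basis_of_ne hea.symm,
    F.coord_basis_of_ne hea, smul_eq_mul]
  ring

lemma step_flip_and_coord_flip_opp (hF : F.IsSpecial (negDirection hC h0 hz))
    (ha : F.step a = 2) (hea : e ≠ a) (hae : F.coord a (F.opp e) ≠ 0) :
    (F.flip a).step e = 1 ∧
      ∀ j, j ≠ e → j ≠ a → (F.flip a).coord j ((F.flip a).opp e) = 0 := by
  obtain ⟨hlevel, hnonneg⟩ := F.level_flip_opp hC h0 (by omega) hea
  have hcoord : (F.flip a).coord a ((F.flip a).opp e) = 1 := by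
    have h := ((hF.flip_opp_eq_or ha hea).resolve_left fun h => hae h.2).2
    rw [coord_flip_self, h, hF.coord_opp_self_of_step_eq_two ha, div_self (by norm_num)]
  have hle := (F.flip a).coord_add_coord_le_level hea.symm fun j _ hj => hnonneg j hj
  have hge := (F.flip a).neg_one_le_coord_opp hlevel
  have hstep := (F.flip a).step_mul_coord_of_neg
    (mem_zeroVerts.2 ⟨(F.flip a).opp_mem e, hlevel⟩) ((F.flip a).coord_opp_neg e)
  rw [show (F.flip a).coord e ((F.flip a).opp e) = -1 by linarith] at hstep
  refine ⟨by exact_mod_cast (by linarith : ((F.flip a).step e : ℝ) = 1), fun j hje hja => ?_⟩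
  exact (F.flip a).coord_eq_zero_of_level_le hea.symm (fun j _ hj => hnonneg j hj)
    (by linarith) hja hje

lemma opp_ne_half_smul_sub (hF : F.IsSpecial (negDirection hC h0 hz))
    (ha : F.step a = 2) (he : F.step e = 2) (hea : e ≠ a) :
    F.opp a ≠ (1 / 2 : ℝ) • (F.basis e - F.basis a) := by
  intro hx
  have hxe := hF.opp_eq_half_smul_sub_symm he hea hx
  obtain ⟨hstep, hcoord⟩ := hF.step_flip_and_coord_flip_opp ha hea (by
    rw [hxe, map_smul, map_sub, coord_self, F.coord_basis_of_ne hea]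
    norm_num)
  set H := (F.flip a).flip e
  have hlevel : ∀ w, H.level w = F.level w - 3 * F.coord a w - F.coord e w := fun w => by
    rw [Facet.level_flip, Facet.level_flip, hstep, ha, coord_flip_of_opp_eq_half_smul_sub hea hx]
    push_cast
    ring
  have hHcoord : ∀ j, j ≠ e → j ≠ a → ∀ w, H.coord j w = F.coord j w := fun j hje hja w => by
    rw [coord_flip_of_ne _ hje, hcoord j hje hja, coord_flip_of_ne _ hja, hx, map_smul, map_sub,
      F.coord_basis_of_ne hja.symm, F.coord_basis_of_ne hje.symm]
    simp
  have hza := hF.coord_deep_of_step_eq_two ha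
  have hze := hF.coord_deep_of_step_eq_two he
  obtain ⟨j, hje, hja, hj⟩ : ∃ j, j ≠ e ∧ j ≠ a ∧ F.coord j z ≠ 0 := by
    by_contra! h
    linarith [F.level_eq_add_of_coord_eq_zero hea h, hF.level_deep]
  have hz_eq := H.eq_opp_of_coord_neg (i := j)
    (mem_zeroVerts.2 ⟨hz, by rw [hlevel, hF.level_deep, hza, hze]; norm_num⟩)
    (by rw [hHcoord j hje hja]; exact (hF.coord_deep_nonpos j).lt_of_ne hj)
  have hj_eq := H.eq_opp_of_coord_neg (i := j) (w := F.opp j)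
    (mem_zeroVerts.2 ⟨F.opp_mem j, by
      rw [hlevel, hF.isFull.level_opp, hF.coord_opp_eq_zero_of_step_eq_two ha he hea hx hja hje,
        hF.coord_opp_eq_zero_of_step_eq_two he ha hea.symm hxe hje hja]
      norm_num⟩)
    (by rw [hHcoord j hje hja]; exact F.coord_opp_neg j)
  linarith [hF.level_deep, hF.isFull.level_opp j, congrArg F.level (hz_eq.trans hj_eq.symm)]

lemma step_eq_one_of_negDirection (hF : F.IsSpecial (negDirection hC h0 hz)) (a : ι) :
    F.step a = 1 := by
  by_contra h
  have ha := F.step_eq_two_of_ne_one hC h0 h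
  obtain ⟨e, hea, he, hx⟩ := hF.exists_opp_eq_half_smul_sub ha
  exact hF.opp_ne_half_smul_sub ha he hea hx

end Facet.IsSpecial

end VanishingVertexSum

section VanishingVertexSumPentagon

lemma two_smul_notMem_verts {x : E} (hx : x ∈ C.lattice) : (2 : ℝ) • x ∉ C.verts := by
  intro hmem
  obtain ⟨F, hF⟩ := Facet.exists_forall_coord_nonneg C x
  have hle := F.level_le hmem
  rw [map_smul, smul_eq_mul] at hle
  have hne : x ≠ 0 := fun h => C.zero_notMem (by simpa [h] using hmem)
  linarith [F.level_eq_one_of_coord_nonneg hx hne hF (by linarith)]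

namespace Facet

variable {F : C.Facet} {a p q l : ι}

lemma coord_flip_self_of_opp_eq_sub (hap : a ≠ p) (hx : F.opp p = F.basis a - F.basis p) (w : E) :
    (F.flip p).coord p w = -F.coord p w := by
  rw [coord_flip_self, hx, map_sub, coord_self, F.coord_basis_of_ne hap]
  ring

lemma coord_flip_of_opp_eq_sub (hap : a ≠ p) (hx : F.opp p = F.basis a - F.basis p) (w : E) :
    (F.flip p).coord a w = F.coord a w + F.coord p w := by
  rw [coord_flip_of_ne _ hap, hx]
  simp only [map_sub, coord_self, F.coord_basis_of_ne hap, F.coord_basis_of_ne hap.symm]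
  ring

lemma coord_flip_of_opp_eq_sub_of_ne (hlp : l ≠ p) (hla : l ≠ a)
    (hx : F.opp p = F.basis a - F.basis p) (w : E) : (F.flip p).coord l w = F.coord l w := by
  rw [coord_flip_of_ne _ hlp, hx, map_sub, F.coord_basis_of_ne hlp.symm,
    F.coord_basis_of_ne hla.symm]
  ring

namespace IsSpecial

variable {hC : C.IsAlmostMaximal} {h0 : C.vertexSum = 0} {z : E} {hz : z ∈ C.verts} {i : ι} {w : E}

lemma level_flip_of_negDirection (hF : F.IsSpecial (negDirection hC h0 hz)) (i : ι) (w : E) :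
    (F.flip i).level w = F.level w - F.coord i w := by
  rw [Facet.level_flip, hF.step_eq_one_of_negDirection, Int.cast_one, one_mul]

lemma exists_int_coord_of_negDirection (hF : F.IsSpecial (negDirection hC h0 hz)) (i : ι)
    (hw : w ∈ C.lattice) : ∃ n : ℤ, F.coord i w = n :=
  F.exists_int_coord_of_step_eq_one (hF.step_eq_one_of_negDirection i) hw

lemma exists_opp_eq_basis_sub (hF : F.IsSpecial (negDirection hC h0 hz)) (i : ι) :
    ∃ a ≠ i, F.opp i = F.basis a - F.basis i := by
  obtain ⟨a, hai, ha⟩ : ∃ a ≠ i, F.coord a (F.opp i) ≠ 0 := by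
    by_contra! h
    have hlevel := hF.isFull.level_opp i
    rw [level_eq_sum, Fintype.sum_eq_single i h] at hlevel
    exact (F.coord_opp_neg i).ne hlevel
  obtain ⟨n, hn⟩ := hF.exists_int_coord_of_negDirection a (C.verts_subset (F.opp_mem i))
  have hpos : (0 : ℝ) < n := hn ▸ (hF.isFull.coord_opp_nonneg hai).lt_of_ne' ha
  have hge : (1 : ℝ) ≤ n := by exact_mod_cast hpos
  exact ⟨a, hai, (hF.isFull.opp_eq_sub_of_one_le_coord hai (hn ▸ hge)).1⟩

lemma coord_deep_eq_zero_or_neg_one (hF : F.IsSpecial (negDirection hC h0 hz)) (p : ι) :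
    F.coord p z = 0 ∨ F.coord p z = -1 := by
  classical
  have hsum : -2 = F.coord p z + ∑ i ∈ Finset.univ.erase p, F.coord i z := by
    rw [Finset.add_sum_erase _ (F.coord · z) (Finset.mem_univ p), ← level_eq_sum, hF.level_deep]
  have hrest : ∑ i ∈ Finset.univ.erase p, F.coord i z ≤ 0 :=
    Finset.sum_nonpos fun i _ => hF.coord_deep_nonpos i
  have hne : F.coord p z ≠ -2 := by
    intro h
    have hzero := (Finset.sum_eq_zero_iff_of_nonpos fun i _ => hF.coord_deep_nonpos i).1
      (by linarith : ∑ i ∈ Finset.univ.erase p, F.coord i z = 0)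
    have hzp := F.eq_smul_of_coord_eq_zero (w := z) (p := p) fun i hi => hzero i (by simp [hi])
    rw [hF.level_deep, neg_smul, ← smul_neg] at hzp
    exact C.two_smul_notMem_verts (neg_mem (F.basis_mem_lattice p)) (hzp ▸ hz)
  obtain ⟨n, hn⟩ := hF.exists_int_coord_of_negDirection p (C.verts_subset hz)
  have hle := hF.coord_deep_nonpos p
  have hge : -2 ≤ F.coord p z := by linarith
  rw [hn] at hne hle hge ⊢
  norm_cast at hne hle hge ⊢
  omega

lemma exists_deep_eq_neg_sub (hF : F.IsSpecial (negDirection hC h0 hz)) :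
    ∃ p q, p ≠ q ∧ z = -F.basis p - F.basis q := by
  have hlevel := hF.level_deep
  obtain ⟨p, hp⟩ : ∃ p, F.coord p z ≠ 0 := by
    by_contra! h
    simp [level_eq_sum, h] at hlevel
  replace hp := (hF.coord_deep_eq_zero_or_neg_one p).resolve_left hp
  obtain ⟨q, hqp, hq⟩ : ∃ q ≠ p, F.coord q z ≠ 0 := by
    by_contra! h
    rw [level_eq_sum, Fintype.sum_eq_single p h, hp] at hlevel
    norm_num at hlevel
  replace hq := (hF.coord_deep_eq_zero_or_neg_one q).resolve_left hq
  have hzero : ∀ i, i ≠ p → i ≠ q → F.coord i z = 0 := fun i hip hiq => by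
    have h := F.coord_eq_zero_of_level_le hqp.symm (w := -z) (i := i)
      (fun j _ _ => by simpa using hF.coord_deep_nonpos j)
      (by simp only [map_neg, hlevel, hp, hq]; norm_num) hip hiq
    simpa using h
  refine ⟨p, q, hqp.symm, ?_⟩
  rw [F.eq_smul_add_smul_of_coord_eq_zero hqp.symm hzero, hp, hq]
  module

end IsSpecial

/-- The deep vertex of a facet is minus the sum of two distinct vertices of the facet. -/
structure IsDeepPair (F : C.Facet) (z : E) (p q : ι) : Prop where
  ne : p ≠ q
  eq_neg_sub : z = -F.basis p - F.basis q

namespace IsDeepPair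

variable {hC : C.IsAlmostMaximal} {h0 : C.vertexSum = 0} {z : E} {hz : z ∈ C.verts} {i : ι} {w : E}

lemma symm (h : F.IsDeepPair z p q) : F.IsDeepPair z q p :=
  ⟨h.ne.symm, by rw [h.eq_neg_sub]; abel⟩

lemma coord_left (h : F.IsDeepPair z p q) : F.coord p z = -1 := by
  simp [h.eq_neg_sub, F.coord_basis_of_ne h.ne.symm]

lemma coord_right (h : F.IsDeepPair z p q) : F.coord q z = -1 := h.symm.coord_left

lemma coord_of_ne (h : F.IsDeepPair z p q) (hip : i ≠ p) (hiq : i ≠ q) : F.coord i z = 0 := by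
  simp [h.eq_neg_sub, F.coord_basis_of_ne hip.symm, F.coord_basis_of_ne hiq.symm]

lemma coord_dir_ne_zero (h : F.IsDeepPair z p q) : F.coord p (negDirection hC h0 hz).dir ≠ 0 :=
  fun h1 => by linarith [IsSpecial.coord_dir_eq_zero_iff.1 h1, h.coord_left]

lemma eq_of_opp_eq_sub (h : F.IsDeepPair z p q) (hF : F.IsSpecial (negDirection hC h0 hz))
    (hx : F.opp p = F.basis q - F.basis p) (hw : w ∈ C.verts)
    (h1 : F.level w - 2 * F.coord p w - F.coord q w = 1) (hlt : F.level w - F.coord p w < 1) :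
    w = z := by
  have hcoord := coord_flip_of_opp_eq_sub (F := F) h.ne.symm hx
  have hlevel := hF.level_flip_of_negDirection p
  have hle := (F.flip p).level_flip_le q hz
  have hstep := (F.flip p).one_le_step q
  rw [hlevel, hcoord, hF.level_deep, h.coord_left, h.coord_right] at hle
  replace hstep : ((F.flip p).step q : ℝ) = 1 := by linarith
  have hzq := (F.flip p).eq_opp_of_level_flip (i := q) hz
    (by rw [hlevel, hcoord, hF.level_deep, h.coord_left, h.coord_right, hstep]; norm_num)
    (by rw [hlevel, hF.level_deep, h.coord_left]; norm_num)
  exact ((F.flip p).eq_opp_of_level_flip (i := q) hw (by rw [hlevel, hcoord, hstep]; linarith)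
    (by rwa [hlevel])).trans hzq.symm

lemma opp_right_eq_sub (h : F.IsDeepPair z p q) (hF : F.IsSpecial (negDirection hC h0 hz))
    (hx : F.opp p = F.basis q - F.basis p) : F.opp q = F.basis p - F.basis q := by
  obtain ⟨a, haq, ha⟩ := hF.exists_opp_eq_basis_sub q
  rcases eq_or_ne a p with rfl | hap
  · exact ha
  have hlevel := hF.isFull.level_opp q
  have hp : F.coord p (F.opp q) = 0 := by
    simp [ha, F.coord_basis_of_ne hap, F.coord_basis_of_ne h.ne.symm]
  have hq : F.coord q (F.opp q) = -1 := by simp [ha, F.coord_basis_of_ne haq]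
  have := h.eq_of_opp_eq_sub hF hx (F.opp_mem q) (by rw [hlevel, hp, hq]; norm_num)
    (by rw [hlevel, hp]; norm_num)
  linarith [this ▸ hF.level_deep]

lemma neg_basis_notMem (h : F.IsDeepPair z p q) (hF : F.IsSpecial (negDirection hC h0 hz))
    (hx : F.opp p = F.basis q - F.basis p) : -F.basis p ∉ C.verts := by
  intro hmem
  have := h.eq_of_opp_eq_sub hF hx hmem
    (by simp [F.coord_basis_of_ne h.ne]; norm_num) (by simp)
  have hlevel := hF.level_deep
  rw [← this, map_neg, level_basis] at hlevel
  norm_num at hlevel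

end IsDeepPair

namespace IsSpecial

variable {hC : C.IsAlmostMaximal} {h0 : C.vertexSum = 0} {z : E} {hz : z ∈ C.verts} {i : ι} {w : E}

lemma eq_neg_basis_of_two_support (hF : F.IsSpecial (negDirection hC h0 hz)) (hpq : p ≠ q)
    (hw : w ∈ C.verts) (h1 : F.level w = -1)
    (hsupp : ∀ i, i ≠ p → i ≠ q → F.coord i w = 0) : w = -F.basis p ∨ w = -F.basis q := by
  have hge : ∀ i, -2 < F.coord i w := fun i => by
    have hne : w ≠ F.opp i := fun h => by linarith [h ▸ hF.isFull.level_opp i]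
    have := F.level_flip_lt_of_ne hw hne (by linarith)
    rw [hF.step_eq_one_of_negDirection, Int.cast_one, one_mul] at this
    linarith
  have hsum := F.level_eq_add_of_coord_eq_zero hpq hsupp
  have hp := hge p
  have hq := hge q
  obtain ⟨m, hm⟩ := hF.exists_int_coord_of_negDirection p (C.verts_subset hw)
  obtain ⟨n, hn⟩ := hF.exists_int_coord_of_negDirection q (C.verts_subset hw)
  rw [F.eq_smul_add_smul_of_coord_eq_zero hpq hsupp]
  rw [h1, hm, hn] at hsum
  rw [hm] at hp ⊢
  rw [hn] at hq ⊢
  norm_cast at hsum hp hq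
  obtain ⟨rfl, rfl⟩ | ⟨rfl, rfl⟩ : m = -1 ∧ n = 0 ∨ m = 0 ∧ n = -1 := by omega
  · left
    simp
  · right
    simp

end IsSpecial

namespace IsDeepPair

variable {hC : C.IsAlmostMaximal} {h0 : C.vertexSum = 0} {z : E} {hz : z ∈ C.verts} {i : ι} {w : E}

lemma eq_deep_of_mem_residualVerts (h : F.IsDeepPair z p q)
    (hF : F.IsSpecial (negDirection hC h0 hz)) (hx : F.opp p = F.basis q - F.basis p)
    (hw : w ∈ F.residualVerts (negDirection hC h0 hz)) : w = z := by
  by_contra hne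
  have hxq := h.opp_right_eq_sub hF hx
  obtain ⟨hwC, hle, -⟩ := mem_residualVerts.1 hw
  have h1 : F.level w = -1 := hle.antisymm
    (F.neg_one_le_level_of_ne hC (F.level_vertexSum_eq_zero h0) hz hwC hne
      (by linarith [hF.level_deep]))
  have hdir : ∀ i, i ≠ p → i ≠ q → F.coord i (negDirection hC h0 hz).dir = 0 :=
    fun i hip hiq => IsSpecial.coord_dir_eq_zero_iff.2 (h.coord_of_ne hip hiq)
  have hsupp : ∀ i, i ≠ p → i ≠ q → F.coord i w = 0 := by
    intro i hip hiq
    by_contra hi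
    have hn : ¬ F.IsHexIndex (negDirection hC h0 hz) i := fun hhex =>
      hi (hF.coord_eq_zero_of_mem_residualVerts hhex hw h1)
    obtain ⟨l, hl, -, hopp, -⟩ :=
      hF.exists_eq_opp_sub_of_not_isHexIndex (hdir i hip hiq) hn hwC h1 hi
    rcases eq_or_ne l p with rfl | hlp
    · exact hiq (F.basis.injective (sub_left_injective (hopp.symm.trans hx)))
    rcases eq_or_ne l q with rfl | hlq
    · exact hip (F.basis.injective (sub_left_injective (hopp.symm.trans hxq)))
    exact hl (hdir l hlp hlq)
  obtain rfl | rfl := hF.eq_neg_basis_of_two_support h.ne hwC h1 hsupp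
  · exact h.neg_basis_notMem hF hx hwC
  · exact h.symm.neg_basis_notMem hF hxq hwC

lemma splitsOffPentagon_E2v (h : F.IsDeepPair z p q) (heven : Even (Fintype.card ι))
    (hF : F.IsSpecial (negDirection hC h0 hz)) (hx : F.opp p = F.basis q - F.basis p) :
    C.SplitsOffPentagon E2v := by
  have hsub : F.residualVerts (negDirection hC h0 hz) ⊆ {z} := fun w hw =>
    Finset.mem_singleton.2 (h.eq_deep_of_mem_residualVerts hF hx hw)
  obtain ⟨v, hv, hsplit⟩ := hF.exists_isHexSplit hC heven h.ne
    (fun ⟨_, ha⟩ => h.coord_dir_ne_zero ha.left) (fun ⟨_, ha⟩ => h.symm.coord_dir_ne_zero ha.left)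
    ((Finset.card_le_card hsub).trans (by simp))
  obtain rfl : v = z := by simpa [hv] using hsub
  rw [h.eq_neg_sub] at hsplit
  exact hsplit.splitsOffPentagon_E2v (hF.step_eq_one_of_negDirection q) hx
    (h.opp_right_eq_sub hF hx)

end IsDeepPair

end Facet

end VanishingVertexSumPentagon

section CrossedPair

/-- A deep pair `p`, `q` for which both neighbouring vertices `F.opp p` and `F.opp q` leave the
plane of the pair; see `IsSpecial.not_isCrossedPair` for their non-existence. -/
structure Facet.IsCrossedPair (F : C.Facet) (z : E) (p q i j : ι) : Prop
    extends F.IsDeepPair z p q where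
  left_ne_left : i ≠ p
  left_ne_right : i ≠ q
  right_ne_left : j ≠ p
  right_ne_right : j ≠ q
  opp_left : F.opp p = F.basis i - F.basis p
  opp_right : F.opp q = F.basis j - F.basis q

namespace Facet.IsCrossedPair

variable {hC : C.IsAlmostMaximal} {h0 : C.vertexSum = 0} {z : E} {hz : z ∈ C.verts} {F : C.Facet}
  {p q i j : ι}

lemma opp_flip_right (h : F.IsCrossedPair z p q i j)
    (hF : F.IsSpecial (negDirection hC h0 hz)) :
    (F.flip p).opp q = (F.flip p).basis j - (F.flip p).basis q ∧ (F.flip p).step q = 1 := by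
  have hp : F.coord p (F.opp q) = 0 := by
    simp [h.opp_right, F.coord_basis_of_ne h.right_ne_left, F.coord_basis_of_ne h.ne.symm]
  have hq : (F.flip p).coord q (F.opp q) = -1 := by
    rw [coord_flip_of_opp_eq_sub_of_ne h.ne.symm h.left_ne_right.symm h.opp_left, h.opp_right]
    simp [F.coord_basis_of_ne h.right_ne_right]
  have hzero : F.opp q ∈ (F.flip p).zeroVerts := mem_zeroVerts.2 ⟨F.opp_mem q, by
    rw [hF.level_flip_of_negDirection, hF.isFull.level_opp, hp, sub_zero]⟩
  have hneg : (F.flip p).coord q (F.opp q) < 0 := by rw [hq]; norm_num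
  have hstep := (F.flip p).step_mul_coord_of_neg hzero hneg
  rw [hq] at hstep
  refine ⟨?_, by exact_mod_cast (by linarith : ((F.flip p).step q : ℝ) = 1)⟩
  rw [← (F.flip p).eq_opp_of_coord_neg hzero hneg, F.flip_basis_of_ne h.right_ne_left,
    F.flip_basis_of_ne h.ne.symm, h.opp_right]

lemma level_flip_flip (h : F.IsCrossedPair z p q i j)
    (hF : F.IsSpecial (negDirection hC h0 hz)) (w : E) :
    ((F.flip p).flip q).level w = F.level w - F.coord p w - F.coord q w := by
  rw [level_flip, (h.opp_flip_right hF).2, hF.level_flip_of_negDirection,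
    coord_flip_of_opp_eq_sub_of_ne h.ne.symm h.left_ne_right.symm h.opp_left, Int.cast_one, one_mul]

lemma coord_left_flip_flip (h : F.IsCrossedPair z p q i j)
    (hF : F.IsSpecial (negDirection hC h0 hz)) (w : E) :
    ((F.flip p).flip q).coord p w = -F.coord p w := by
  rw [coord_flip_of_opp_eq_sub_of_ne h.ne h.right_ne_left.symm (h.opp_flip_right hF).1,
    coord_flip_self_of_opp_eq_sub h.left_ne_left h.opp_left]

lemma coord_right_flip_flip (h : F.IsCrossedPair z p q i j)
    (hF : F.IsSpecial (negDirection hC h0 hz)) (w : E) :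
    ((F.flip p).flip q).coord q w = -F.coord q w := by
  rw [coord_flip_self_of_opp_eq_sub h.right_ne_right (h.opp_flip_right hF).1,
    coord_flip_of_opp_eq_sub_of_ne h.ne.symm h.left_ne_right.symm h.opp_left]

lemma deep_mem_zeroVerts_flip_flip (h : F.IsCrossedPair z p q i j)
    (hF : F.IsSpecial (negDirection hC h0 hz)) : z ∈ ((F.flip p).flip q).zeroVerts := by
  refine mem_zeroVerts.2 ⟨hz, ?_⟩
  rw [h.level_flip_flip hF, hF.level_deep, h.coord_left, h.coord_right]
  norm_num

lemma target_ne (h : F.IsCrossedPair z p q i j) (hF : F.IsSpecial (negDirection hC h0 hz)) :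
    i ≠ j := by
  rintro rfl
  have hcoord : ((F.flip p).flip q).coord i z = -2 := by
    rw [coord_flip_of_opp_eq_sub h.left_ne_right (h.opp_flip_right hF).1,
      coord_flip_of_opp_eq_sub h.left_ne_left h.opp_left,
      coord_flip_of_opp_eq_sub_of_ne h.ne.symm h.left_ne_right.symm h.opp_left,
      h.coord_of_ne h.left_ne_left h.left_ne_right, h.coord_left, h.coord_right]
    norm_num
  have hstep := ((F.flip p).flip q).step_mul_coord_of_neg (h.deep_mem_zeroVerts_flip_flip hF)
    (by rw [hcoord]; norm_num)
  rw [hcoord] at hstep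
  norm_cast at hstep
  omega

lemma coord_target_left_flip_flip (h : F.IsCrossedPair z p q i j)
    (hF : F.IsSpecial (negDirection hC h0 hz)) (w : E) :
    ((F.flip p).flip q).coord i w = F.coord i w + F.coord p w := by
  rw [coord_flip_of_opp_eq_sub_of_ne h.left_ne_right (h.target_ne hF) (h.opp_flip_right hF).1,
    coord_flip_of_opp_eq_sub h.left_ne_left h.opp_left]

lemma coord_target_right_flip_flip (h : F.IsCrossedPair z p q i j)
    (hF : F.IsSpecial (negDirection hC h0 hz)) (w : E) :
    ((F.flip p).flip q).coord j w = F.coord j w + F.coord q w := by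
  rw [coord_flip_of_opp_eq_sub h.right_ne_right (h.opp_flip_right hF).1,
    coord_flip_of_opp_eq_sub_of_ne h.right_ne_left (h.target_ne hF).symm h.opp_left,
    coord_flip_of_opp_eq_sub_of_ne h.ne.symm h.left_ne_right.symm h.opp_left]

lemma coord_deep_flip_flip (h : F.IsCrossedPair z p q i j)
    (hF : F.IsSpecial (negDirection hC h0 hz)) : ((F.flip p).flip q).coord i z = -1 := by
  rw [h.coord_target_left_flip_flip hF, h.coord_of_ne h.left_ne_left h.left_ne_right, h.coord_left,
    zero_add]

lemma deep_eq_opp_flip_flip (h : F.IsCrossedPair z p q i j)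
    (hF : F.IsSpecial (negDirection hC h0 hz)) :
    z = ((F.flip p).flip q).opp i ∧ (((F.flip p).flip q).step i : ℝ) = 1 := by
  have hcoord := h.coord_deep_flip_flip hF
  have hzero := h.deep_mem_zeroVerts_flip_flip hF
  have hneg : ((F.flip p).flip q).coord i z < 0 := by rw [hcoord]; norm_num
  have hstep := ((F.flip p).flip q).step_mul_coord_of_neg hzero hneg
  rw [hcoord] at hstep
  exact ⟨((F.flip p).flip q).eq_opp_of_coord_neg hzero hneg, by linarith⟩

lemma opp_target_left (h : F.IsCrossedPair z p q i j)
    (hF : F.IsSpecial (negDirection hC h0 hz)) : F.opp i = F.basis p - F.basis i := by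
  have hdir : ∀ l, l ≠ p → l ≠ q → F.coord l (negDirection hC h0 hz).dir = 0 :=
    fun l hlp hlq => IsSpecial.coord_dir_eq_zero_iff.2 (h.coord_of_ne hlp hlq)
  have hi := hdir i h.left_ne_left h.left_ne_right
  obtain ⟨e, hei, he⟩ := hF.exists_opp_eq_basis_sub i
  rcases eq_or_ne e p with rfl | hep
  · exact he
  exfalso
  rcases eq_or_ne e q with rfl | heq
  · have hmem := hF.opp_sub_mem hi h.left_ne_left.symm h.opp_left
    have hlevel := hF.isFull.level_opp_sub_basis i p
    have hp : F.coord p (F.opp i - F.basis p) = -1 := by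
      simp [he, F.coord_basis_of_ne hep, F.coord_basis_of_ne h.left_ne_left]
    have he' : F.coord e (F.opp i - F.basis p) = 1 := by
      simp [he, F.coord_basis_of_ne h.left_ne_right, F.coord_basis_of_ne h.ne]
    have hi' : F.coord i (F.opp i - F.basis p) = -1 := by
      simp [he, F.coord_basis_of_ne hei, F.coord_basis_of_ne h.left_ne_left.symm]
    have hdeep := ((F.flip p).flip e).eq_opp_of_level_flip (i := i) hmem
      (by rw [(h.deep_eq_opp_flip_flip hF).2, h.level_flip_flip hF,
            h.coord_target_left_flip_flip hF, hlevel, hp, he', hi']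
          norm_num)
      (by rw [h.level_flip_flip hF, hlevel, hp, he']; norm_num)
    rw [← (h.deep_eq_opp_flip_flip hF).1] at hdeep
    linarith [hF.level_deep, congrArg F.level hdeep]
  · have hpair : F.IsHexPair (negDirection hC h0 hz) i e := ⟨hi, hdir e hep heq, hei, he⟩
    exact hep (hpair.eq_of_coord_opp_ne_zero hF h.left_ne_left.symm (by
      simp [h.opp_left, F.coord_basis_of_ne h.left_ne_left.symm])).symm

lemma neg_basis_mem (h : F.IsCrossedPair z p q i j)
    (hF : F.IsSpecial (negDirection hC h0 hz)) : -F.basis i ∈ C.verts := by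
  have hmem := hF.opp_sub_mem (IsSpecial.coord_dir_eq_zero_iff.2
    (h.coord_of_ne h.left_ne_left h.left_ne_right)) h.left_ne_left.symm h.opp_left
  rwa [h.opp_target_left hF, sub_sub_cancel_left] at hmem

lemma coord_flip_flip_flip (h : F.IsCrossedPair z p q i j)
    (hF : F.IsSpecial (negDirection hC h0 hz)) {l : ι} (hl : l ≠ i) (w : E) :
    (((F.flip p).flip q).flip i).coord l w = ((F.flip p).flip q).coord l w +
      ((F.flip p).flip q).coord l z * (F.coord i w + F.coord p w) := by
  rw [coord_flip_of_ne _ hl, ← (h.deep_eq_opp_flip_flip hF).1, h.coord_deep_flip_flip hF,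
    h.coord_target_left_flip_flip hF]
  ring

end Facet.IsCrossedPair

lemma Facet.IsSpecial.not_isCrossedPair {hC : C.IsAlmostMaximal} {h0 : C.vertexSum = 0} {z : E}
    {hz : z ∈ C.verts} {F : C.Facet} (hF : F.IsSpecial (negDirection hC h0 hz)) (p q i j : ι) :
    ¬ F.IsCrossedPair z p q i j := by
  intro h
  obtain ⟨hdeep, hstep⟩ := h.deep_eq_opp_flip_flip hF
  have hbp := F.coord_basis_of_ne h.left_ne_left
  have hbq := F.coord_basis_of_ne h.left_ne_right
  have hlevel : (((F.flip p).flip q).flip i).level (F.basis i) = 0 := by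
    rw [Facet.level_flip, hstep, h.level_flip_flip hF, h.coord_target_left_flip_flip hF, hbp, hbq]
    simp
  have hp : (((F.flip p).flip q).flip i).coord p (F.basis i) = 1 := by
    simp [h.coord_flip_flip_flip hF h.left_ne_left.symm, h.coord_left_flip_flip hF, hbp,
      h.coord_left]
  have hq : (((F.flip p).flip q).flip i).coord q (F.basis i) = 1 := by
    simp [h.coord_flip_flip_flip hF h.left_ne_right.symm, h.coord_right_flip_flip hF, hbp, hbq,
      h.coord_right]
  have hj : (((F.flip p).flip q).flip i).coord j (F.basis i) = -1 := by
    simp [h.coord_flip_flip_flip hF (h.target_ne hF).symm, h.coord_target_right_flip_flip hF, hbp,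
      hbq, F.coord_basis_of_ne (h.target_ne hF), h.coord_of_ne h.right_ne_left h.right_ne_right,
      h.coord_right]
  have hi : (((F.flip p).flip q).flip i).coord i (F.basis i) = -1 := by
    rw [coord_flip_self, ← hdeep, h.coord_deep_flip_flip hF, h.coord_target_left_flip_flip hF, hbp]
    norm_num
  have heq := (((F.flip p).flip q).flip i).eq_of_two_coord_neg
    (Facet.card_le_card_zeroVerts_add_one hC _ (level_vertexSum_eq_zero h0 _))
    (mem_zeroVerts.2 ⟨h.neg_basis_mem hF, by rw [map_neg, hlevel, neg_zero]⟩)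
    (mem_zeroVerts.2 ⟨F.basis_mem i, hlevel⟩) h.ne (h.target_ne hF)
    (by rw [map_neg, hp]; norm_num) (by rw [map_neg, hq]; norm_num)
    (by rw [hi]; norm_num) (by rw [hj]; norm_num)
  have := congrArg F.level heq
  rw [map_neg, Facet.level_basis] at this
  norm_num at this

theorem splitsOffPentagon_of_vertexSum_eq_zero (hC : C.IsAlmostMaximal)
    (heven : Even (Fintype.card ι)) (h0 : C.vertexSum = 0) : C.SplitsOffPentagon E2v := by
  have hodd : Odd C.verts.card := by
    have hcard : C.verts.card + 1 = 3 * Fintype.card ι := hC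
    grind
  obtain ⟨F, z, hz, hlt⟩ := exists_level_lt_neg_one hodd
  have hF : F.IsSpecial (negDirection hC h0 hz) := by
    have hge := F.neg_two_le_level hC (F.level_vertexSum_eq_zero h0) hz
    have hle := F.level_le_neg_two hz hlt
    change F.level (-z) = 2
    rw [map_neg]
    linarith
  obtain ⟨p, q, hpq, hzpq⟩ := hF.exists_deep_eq_neg_sub
  have h : F.IsDeepPair z p q := ⟨hpq, hzpq⟩
  obtain ⟨i, hip, hi⟩ := hF.exists_opp_eq_basis_sub p
  obtain ⟨j, hjq, hj⟩ := hF.exists_opp_eq_basis_sub q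
  rcases eq_or_ne i q with rfl | hiq
  · exact h.splitsOffPentagon_E2v heven hF hi
  rcases eq_or_ne j p with rfl | hjp
  · exact h.symm.splitsOffPentagon_E2v heven hF hj
  exact (hF.not_isCrossedPair p q i j ⟨h, hip, hiq, hjp, hjq, hi, hj⟩).elim

end CrossedPair

theorem IsAlmostMaximal.splitsOffPentagon (hC : C.IsAlmostMaximal)
    (heven : Even (Fintype.card ι)) :
    C.SplitsOffPentagon tV2v ∨ C.SplitsOffPentagon E1v ∨ C.SplitsOffPentagon E2v := by
  by_cases h0 : C.vertexSum = 0
  · exact .inr (.inr (splitsOffPentagon_of_vertexSum_eq_zero hC heven h0))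
  · exact (splitsOffPentagon_of_vertexSum_ne_zero hC heven h0).imp_right .inl

/-! ### The splitting of the polytope -/

section HexPairing

/-- The map `σ` interchanges the two coordinate directions of every hexagon of the configuration,
and `T` contains one direction of each. -/
structure Facet.IsHexPairing [DecidableEq ι] (F : C.Facet) (p q : ι) (σ : ι → ι) (T : Finset ι) :
    Prop where
  opp_left : ∀ i ∈ T, F.opp i = F.basis (σ i) - F.basis i
  opp_right : ∀ i ∈ T, F.opp (σ i) = F.basis i - F.basis (σ i)
  injOn : Set.InjOn σ T
  disjoint : Disjoint T (T.image σ)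
  union_eq : T ∪ T.image σ = {p, q}ᶜ

lemma Facet.IsHexSplit.exists_isHexPairing [LinearOrder ι] {F : C.Facet} {p q : ι} {v : E}
    (h : F.IsHexSplit p q v) : ∃ σ T, F.IsHexPairing p q σ T := by
  have hpartner : ∀ i, ∃ a, i ≠ p → i ≠ q → a ≠ i ∧ a ≠ p ∧ a ≠ q ∧
      F.opp i = F.basis a - F.basis i ∧ F.opp a = F.basis i - F.basis a := fun i => by
    by_cases hi : i ≠ p ∧ i ≠ q
    · obtain ⟨a, ha⟩ := h.exists_partner i hi.1 hi.2
      exact ⟨a, fun _ _ => ha⟩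
    · exact ⟨i, fun hp hq => (hi ⟨hp, hq⟩).elim⟩
  choose σ hσ using hpartner
  have hmem : ∀ {i}, i ∈ ({p, q}ᶜ : Finset ι) ↔ i ≠ p ∧ i ≠ q := by simp
  obtain ⟨T, hT, hinj, hdisj, hunion⟩ := exists_half_of_involution (s := {p, q}ᶜ) (σ := σ)
    (fun i hi => by
      obtain ⟨-, hp, hq, -⟩ := hσ i (hmem.1 hi).1 (hmem.1 hi).2
      exact hmem.2 ⟨hp, hq⟩)
    (fun i hi => (hσ i (hmem.1 hi).1 (hmem.1 hi).2).1)
    (fun i hi => by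
      obtain ⟨-, hp, hq, -, hopp⟩ := hσ i (hmem.1 hi).1 (hmem.1 hi).2
      obtain ⟨-, -, -, hopp', -⟩ := hσ (σ i) hp hq
      exact F.basis.injective (sub_left_injective (hopp'.symm.trans hopp)))
  have hσT : ∀ i ∈ T, _ := fun i hi => (hσ i (hmem.1 (hT hi)).1 (hmem.1 (hT hi)).2).2.2.2
  exact ⟨σ, T, fun i hi => (hσT i hi).1, fun i hi => (hσT i hi).2, hinj, hdisj, hunion⟩

namespace Facet.IsHexPairing

variable [DecidableEq ι] {F : C.Facet} {p q : ι} {σ : ι → ι} {T : Finset ι}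

lemma sum_compl (hT : F.IsHexPairing p q σ T) {M : Type*} [AddCommMonoid M] (g : ι → M) :
    ∑ i ∈ {p, q}ᶜ, g i = ∑ i ∈ T, (g i + g (σ i)) := by
  rw [← hT.union_eq, Finset.sum_union hT.disjoint, Finset.sum_image hT.injOn,
    Finset.sum_add_distrib]

lemma card_eq (hT : F.IsHexPairing p q σ T) (hpq : p ≠ q) :
    Fintype.card ι = 2 * (T.card + 1) := by
  have h := hT.sum_compl fun _ => 1
  simp only [Finset.sum_const, smul_eq_mul, mul_one] at h
  rw [← Finset.card_add_card_compl {p, q}, Finset.card_pair hpq, h]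
  ring

lemma mem_or_exists_eq (hT : F.IsHexPairing p q σ T) {i : ι} (hp : i ≠ p) (hq : i ≠ q) :
    i ∈ T ∨ ∃ j ∈ T, σ j = i := by
  have h : i ∈ T ∪ T.image σ := hT.union_eq ▸ by simp [hp, hq]
  simpa using h

lemma ne_of_mem (hT : F.IsHexPairing p q σ T) {i : ι} (hi : i ∈ T) :
    (i ≠ p ∧ i ≠ q) ∧ σ i ≠ p ∧ σ i ≠ q := by
  have hne : ∀ j ∈ T ∪ T.image σ, j ≠ p ∧ j ≠ q := fun j hj => by
    rw [hT.union_eq] at hj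
    simpa using hj
  exact ⟨hne i (by simp [hi]), hne (σ i) (by simp [Finset.mem_image_of_mem σ hi])⟩

lemma exists_hexagon_iff (hT : F.IsHexPairing p q σ T) {w : E} :
    (∃ i, i ≠ p ∧ i ≠ q ∧ (w = F.basis i ∨ w = -F.basis i ∨ w = F.opp i)) ↔
      ∃ i ∈ T, w ∈ planePoint (F.basis i) (F.basis (σ i) - F.basis i) '' V2v := by
  simp only [mem_image_planePoint_V2v]
  constructor
  · rintro ⟨i, hp, hq, hw⟩
    rcases hT.mem_or_exists_eq hp hq with hi | ⟨j, hj, rfl⟩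
    · exact ⟨i, hi, by rw [hT.opp_left i hi] at hw; tauto⟩
    · exact ⟨j, hj, by rw [hT.opp_right j hj] at hw; tauto⟩
  · rintro ⟨i, hi, hw⟩
    have hw' : (w = F.basis i ∨ w = -F.basis i ∨ w = F.opp i) ∨
        (w = F.basis (σ i) ∨ w = -F.basis (σ i) ∨ w = F.opp (σ i)) := by
      rw [hT.opp_left i hi, hT.opp_right i hi]
      tauto
    obtain ⟨⟨hp, hq⟩, hσp, hσq⟩ := hT.ne_of_mem hi
    exact hw'.elim (fun h => ⟨i, hp, hq, h⟩) fun h => ⟨σ i, hσp, hσq, h⟩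

end Facet.IsHexPairing

namespace IsHexPentagonSplit

variable [DecidableEq ι] {Q : Set (Fin 2 → ℤ)} {F : C.Facet} {p q : ι} {v x y : E} {σ : ι → ι}
  {T : Finset ι}

lemma verts_eq (h : C.IsHexPentagonSplit Q F p q v x y) (hT : F.IsHexPairing p q σ T) :
    (C.verts : Set E) = planePoint x y '' Q ∪
      ⋃ i ∈ T, planePoint (F.basis i) (F.basis (σ i) - F.basis i) '' V2v := by
  ext w
  rw [Finset.mem_coe, h.mem_verts_iff, hT.exists_hexagon_iff, ← h.image_planePoint,
    Set.mem_union, Set.mem_iUnion₂]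
  simp only [exists_prop]

lemma exists_eq_planePoint_add_sum (h : C.IsHexPentagonSplit Q F p q v x y)
    (hT : F.IsHexPairing p q σ T) {w : E} (hw : w ∈ C.lattice) :
    ∃ (t : Fin 2 → ℤ) (s : ι → Fin 2 → ℤ), w = planePoint x y t +
      ∑ i ∈ T, planePoint (F.basis i) (F.basis (σ i) - F.basis i) (s i) := by
  obtain ⟨t, ht⟩ := h.exists_planePoint w hw
  obtain ⟨n, hn⟩ := h.toIsHexSplit.exists_int_coord hw
  refine ⟨t, fun i => ![n i + n (σ i), n (σ i)], ?_⟩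
  have hexpand : w = ∑ i, F.coord i w • F.basis i := (F.basis.sum_repr w).symm
  rw [← Finset.sum_add_sum_compl {p, q}, Finset.sum_pair h.ne, ht, hT.sum_compl] at hexpand
  refine hexpand.trans (congrArg _ (Finset.sum_congr rfl fun i hi => ?_))
  obtain ⟨⟨hp, hq⟩, hσp, hσq⟩ := hT.ne_of_mem hi
  rw [hn i hp hq, hn (σ i) hσp hσq]
  simp only [planePoint, Matrix.cons_val_zero, Matrix.cons_val_one, Int.cast_add]
  module

end IsHexPentagonSplit

end HexPairing

section SplitModel

lemma image_convexHull_eq_splitModel2 {d n : ℕ} (hd : d = 2 * (n + 1)) {Q : Set (Fin 2 → ℤ)}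
    (φ : (Fin d → ℝ) ≃ₗ[ℝ] (Fin d → ℝ)) {x y : Fin (n + 1) → Fin d → ℝ}
    (hφ : ∀ (k : Fin (n + 1)) t, φ (planePoint (x k) (y k) t) = embed2 d (2 * k) t) :
    φ '' convexHull ℝ (planePoint (x 0) (y 0) '' Q ∪
      ⋃ j : Fin n, planePoint (x j.succ) (y j.succ) '' V2v) = splitModel2 d Q := by
  have himage : ∀ (k : Fin (n + 1)) (S : Set (Fin 2 → ℤ)),
      φ '' (planePoint (x k) (y k) '' S) = embed2 d (2 * k) '' S := fun k S => by
    rw [Set.image_image, Set.image_congr fun t _ => hφ k t]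
  have hn : (d - 2) / 2 = n := by omega
  have hconv := φ.toLinearMap.image_convexHull (planePoint (x 0) (y 0) '' Q ∪
      ⋃ j : Fin n, planePoint (x j.succ) (y j.succ) '' V2v)
  simp only [LinearEquiv.coe_coe] at hconv
  rw [hconv, Set.image_union, Set.image_iUnion, splitModel2, hn]
  simp only [himage]
  congr 2
  ext w
  simp [Fin.exists_iff, mul_add]

theorem SplitsOffPentagon.exists_unimodular {d : ℕ} {C : VertexConfig (Fin d) (Fin d → ℝ)}
    (hlat : C.lattice = intLattice d) {Q : Set (Fin 2 → ℤ)} (h : C.SplitsOffPentagon Q) :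
    ∃ φ : (Fin d → ℝ) ≃ₗ[ℝ] (Fin d → ℝ), Unimodular φ ∧
      φ '' convexHull ℝ (C.verts : Set (Fin d → ℝ)) = splitModel2 d Q := by
  obtain ⟨F, p, q, v, x, y, h⟩ := h
  obtain ⟨σ, T, hT⟩ := h.exists_isHexPairing
  have hd : d = 2 * (T.card + 1) := by simpa using hT.card_eq h.ne
  have hLP : ∀ {w}, w ∈ C.lattice → IsLP w := fun hw => by rwa [hlat] at hw
  let f : Fin T.card → Fin d := fun j => T.equivFin.symm j
  have hb : ∀ i, F.basis i ∈ C.lattice := F.basis_mem_lattice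
  obtain ⟨φ, hφ, hφe⟩ := exists_unimodular_embed2 hd
    (x := Fin.cons x fun j => F.basis (f j))
    (y := Fin.cons y fun j => F.basis (σ (f j)) - F.basis (f j))
    (Fin.cons (hLP h.left_mem) fun j => hLP (hb _))
    (Fin.cons (hLP h.right_mem) fun j => hLP (sub_mem (hb _) (hb _)))
    fun w hw => by
      obtain ⟨t, s, rfl⟩ := h.exists_eq_planePoint_add_sum hT (w := w) (hlat ▸ hw)
      refine ⟨Fin.cons t fun j => s (f j), ?_⟩
      rw [Fin.sum_univ_succ, ← Finset.sum_coe_sort, ← T.equivFin.symm.sum_comp]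
      simp [f]
  have hunion : ∀ g : Fin d → Set (Fin d → ℝ), ⋃ i ∈ T, g i = ⋃ j, g (f j) := fun g => by
    rw [T.equivFin.symm.surjective.iUnion_comp fun i : T => g i, Set.iUnion_subtype]
  refine ⟨φ, hφ, ?_⟩
  rw [← image_convexHull_eq_splitModel2 hd φ hφe, h.verts_eq hT, hunion]
  simp only [Fin.cons_zero, Fin.cons_succ]

end SplitModel

theorem exists_vertexConfig {d : ℕ} {P : Set (Fin d → ℝ)} (hd : 0 < d) (hP : IsReflexive P)
    (hs : IsSimplicial P) :
    ∃ C : VertexConfig (Fin d) (Fin d → ℝ), C.lattice = intLattice d ∧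
      (C.verts : Set (Fin d → ℝ)) = Set.extremePoints ℝ P ∧
      convexHull ℝ (C.verts : Set (Fin d → ℝ)) = P := by
  obtain ⟨⟨G, hG, hPG⟩, h0, -⟩ := id hP
  have hsub : Set.extremePoints ℝ P ⊆ G := hPG ▸ extremePoints_convexHull_subset
  have hfin : (Set.extremePoints ℝ P).Finite := G.finite_toSet.subset hsub
  have hhull : convexHull ℝ (Set.extremePoints ℝ P) = P :=
    hPG ▸ convexHull_extremePoints_convexHull G.finite_toSet
  have : Nontrivial (Fin d → ℝ) := Module.nontrivial_of_finrank_pos (R := ℝ) (by simpa using hd)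
  refine ⟨{
    verts := hfin.toFinset
    lattice := intLattice d
    finrank_eq := by simp
    verts_subset := fun w hw => hG w (hsub (hfin.mem_toFinset.1 hw))
    zero_notMem := fun h =>
      (disjoint_interior_extremePoints P).notMem_of_mem_left h0 (hfin.mem_toFinset.1 h)
    exists_neg := fun l hl => ?_
    supporting := fun u hu hspan => ?_ }, rfl, hfin.coe_toFinset,
    hfin.coe_toFinset.symm ▸ hhull⟩
  · obtain ⟨y, hy, hly⟩ := exists_neg_of_zero_mem_interior h0 hl
    by_contra! hge
    have hle := forall_convexHull_le (s := Set.extremePoints ℝ P) (l := -l) (c := 0)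
      (fun w hw => neg_nonpos.2 (hge w (hfin.mem_toFinset.2 hw))) y (hhull.symm ▸ hy)
    exact hly.not_ge (neg_nonpos.1 hle)
  · obtain ⟨x, hx⟩ := exists_eq_dotp u
    obtain rfl : u = dotProductEquiv ℝ (Fin d) x := LinearMap.ext hx
    have hxP : x ∈ dualPolytope P := fun y hy =>
      forall_convexHull_le (s := Set.extremePoints ℝ P)
        (fun w hw => hu w (hfin.mem_toFinset.2 hw)) y (hhull.symm ▸ hy)
    have hspanP : Submodule.span ℝ {y ∈ P | dotp x y = 1} = ⊤ := by
      refine top_unique (hspan.ge.trans (Submodule.span_mono fun w hw => ?_))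
      obtain ⟨hwP, hxw⟩ := Finset.mem_filter.1 hw
      exact ⟨(hfin.mem_toFinset.1 hwP).1, hxw⟩
    refine ⟨fun y hy => exists_int_dotp (isLP_of_span_eq_top hP hxP hspanP) hy, ?_⟩
    refine Eq.trans ?_
      ((ncard_extremePoints_tight hd hs hxP hspanP).trans (Fintype.card_fin d).symm)
    rw [← Set.ncard_coe_finset]
    congr 1
    ext w
    simp only [Finset.coe_filter, hfin.mem_toFinset]
    rfl

end VertexConfig

theorem stmt0_general {d : ℕ} (hd : 2 ≤ d) (hde : Even d)
    (P : Set (Fin d → ℝ)) (hP : IsReflexive P) (hs : IsSimplicial P)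
    (hcard : (Set.extremePoints ℝ P).ncard = 3 * d - 1) :
    ∃ φ : (Fin d → ℝ) ≃ₗ[ℝ] (Fin d → ℝ), Unimodular φ ∧
      (φ '' P = splitModel2 d tV2v ∨ φ '' P = splitModel2 d E1v ∨
        φ '' P = splitModel2 d E2v) := by
  obtain ⟨C, hlat, hverts, rfl⟩ := VertexConfig.exists_vertexConfig (by omega) hP hs
  have hC : C.IsAlmostMaximal := by
    rw [← hverts, Set.ncard_coe_finset] at hcard
    rw [VertexConfig.IsAlmostMaximal, Fintype.card_fin, hcard]
    omega
  rcases hC.splitsOffPentagon (by rwa [Fintype.card_fin]) with h | h | h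
  · exact (h.exists_unimodular hlat).imp fun φ hφ => ⟨hφ.1, .inl hφ.2⟩
  · exact (h.exists_unimodular hlat).imp fun φ hφ => ⟨hφ.1, .inr (.inl hφ.2)⟩
  · exact (h.exists_unimodular hlat).imp fun φ hφ => ⟨hφ.1, .inr (.inr hφ.2)⟩

/-- a `d`-dimensional simplicial reflexive polytope with `3d-1` vertices,
`d ≥ 4` even, splits into `(d-2)/2` copies of `V₂` and one copy of `Ṽ₂`, `E₁` or `E₂`. -/
theorem stmt0 {d : ℕ} (hd : 4 ≤ d) (hde : Even d)
    (P : Set (Fin d → ℝ)) (hP : IsReflexive P) (hs : IsSimplicial P)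
    (hcard : (Set.extremePoints ℝ P).ncard = 3 * d - 1) :
    ∃ φ : (Fin d → ℝ) ≃ₗ[ℝ] (Fin d → ℝ), Unimodular φ ∧
      (φ '' P = splitModel2 d tV2v ∨ φ '' P = splitModel2 d E1v ∨
        φ '' P = splitModel2 d E2v) :=
  stmt0_general (by omega) hde P hP hs hcard
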